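/- arXiv:2411.03516 — 2 statements merged into one kernel-verified Lean document; each statement's English description precedes it below -/
import Mathlib

section
/- Let k ≥ 2 be an integer and let β ∈ E ∩ (k, k+1]. Then the quasi-greedy expansion α(β) of 1 in base β is a sequence over the two-letter alphabet {k−1, k}. -/
open Set Filter MeasureTheory Topology

noncomputable section

/-- The β-transformation `x ↦ βx - ⌊βx⌋`. -/
def Tbeta (β x : ℝ) : ℝ := Int.fract (β * x)

/-- The survivor set `K_β(t)`: points of `[0,1)` whose orbit never enters `[0,t)`. -/
def survivor (β t : ℝ) : Set ℝ :=
  {x | x ∈ Set.Ico (0 : ℝ) 1 ∧ ∀ n : ℕ, t ≤ (Tbeta β)^[n] x}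

/-- The set-valued bifurcation set `E_β`. -/
def Ebif (β : ℝ) : Set ℝ :=
  {t | t ∈ Set.Ico (0 : ℝ) 1 ∧ ∀ t' : ℝ, t < t' → survivor β t' ≠ survivor β t}

/-- `(c)_β = Σ_{i≥1} c_i β^{-i}` for an infinite digit sequence (indexed from `0`). -/
def valSeq (β : ℝ) (c : ℕ → ℕ) : ℝ := ∑' i : ℕ, (c i : ℝ) / β ^ (i + 1)

/-- `(w 0^∞)_β` for a finite word `w`. -/
def valWord (β : ℝ) (w : List ℕ) : ℝ :=
  ∑ i ∈ Finset.range w.length, (w.getD i 0 : ℝ) / β ^ (i + 1)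

/-- `w⁺`: increment the last letter of `w`. -/
def wplus (w : List ℕ) : List ℕ := w.dropLast ++ [w.getLast! + 1]

/-- `w⁻`: decrement the last letter of `w`. -/
def wminus (w : List ℕ) : List ℕ := w.dropLast ++ [w.getLast! - 1]

/-- `θ`: increment every digit of `w` by one. -/
def theta (w : List ℕ) : List ℕ := w.map (· + 1)

/-- `L(w)`: the lexicographically largest cyclic permutation of `w`. -/
def maxCyc (w : List ℕ) : List ℕ := ((List.range w.length).map w.rotate).foldl max []

/-- `w^∞`: the periodic sequence with period block `w`. -/
def perSeq (w : List ℕ) : ℕ → ℕ := fun i => w.getD (i % w.length) 0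

/-- The sequence given by the word `w` followed by the sequence `c`. -/
def wordSeq (w : List ℕ) (c : ℕ → ℕ) : ℕ → ℕ :=
  fun i => if i < w.length then w.getD i 0 else c (i - w.length)

/-- Strict lexicographic order `≺` on sequences. -/
def seqLt (x y : ℕ → ℕ) : Prop := ∃ n, (∀ i < n, x i = y i) ∧ x n < y n

/-- Lexicographic order `≼` on sequences. -/
def seqLe (x y : ℕ → ℕ) : Prop := x = y ∨ seqLt x y

/-- The `n`-fold left shift `σⁿ` on sequences. -/
def shiftn (n : ℕ) (x : ℕ → ℕ) : ℕ → ℕ := fun i => x (i + n)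

/-- One step of the Farey recursion: insert the concatenation `w_i w_{i+1}`
between consecutive entries. -/
def fareyInsert : List (List ℕ) → List (List ℕ)
  | [] => []
  | [w] => [w]
  | w :: v :: rest => w :: (w ++ v) :: fareyInsert (v :: rest)

/-- The ordered set `F_n` of Farey words of level `n`. -/
def fareyLevel : ℕ → List (List ℕ)
  | 0 => [[0], [1]]
  | n + 1 => fareyInsert (fareyLevel n)

/-- `F`: all Farey words of length at least two. -/
def FareySet : Set (List ℕ) := {w | (∃ n, w ∈ fareyLevel n) ∧ w ≠ [0] ∧ w ≠ [1]}

/-- `F̂ = F ∪ {1}`. -/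
def FareyHat : Set (List ℕ) := FareySet ∪ {[1]}

/-- The extended Farey set `F_e = {θ^k(w) : w ∈ F̂, k ≥ 0}`. -/
def FareyExt : Set (List ℕ) := {w | ∃ v ∈ FareyHat, ∃ k : ℕ, w = theta^[k] v}

/-- A nonempty word is Lyndon iff it is strictly smaller than each of its nontrivial
cyclic rotations (equivalently: aperiodic and lexicographically smallest among its
cyclic permutations). -/
def IsLyndon (w : List ℕ) : Prop := w ≠ [] ∧ ∀ i, 0 < i → i < w.length → w < w.rotate i

/-- `L_e`: all Lyndon words over `ℕ ∪ {0}` except the single-letter word `0`. -/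
def LyndonExt : Set (List ℕ) := {w | IsLyndon w ∧ w ≠ [0]}

/-- `L`: Lyndon words over `{0,1}` of length at least `2`. -/
def LyndonBin : Set (List ℕ) := {w | IsLyndon w ∧ 2 ≤ w.length ∧ ∀ d ∈ w, d ≤ 1}

/-- The block of `Φ_s` emitted for current digit `d` after previous digit `p`:
`L(s)` for `00`, `s⁻` for `10`, `L(s)⁺` for `01`, `s` for `11`. -/
def phiBlock (s : List ℕ) (p d : ℕ) : List ℕ :=
  if d = 0 then (if p = 0 then maxCyc s else wminus s)
  else (if p = 0 then wplus (maxCyc s) else s)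

def phiAux (s : List ℕ) : ℕ → List ℕ → List ℕ
  | _, [] => []
  | p, d :: rest => phiBlock s p d ++ phiAux s d rest

/-- The substitution `Φ_s` on finite words; `s • r = subst s r`.  An initial digit `0`
produces `s⁻`, an initial digit `1` produces `L(s)⁺`, and thereafter runs
`0^k` resp. `1^l` produce `L(s)^{k-1}` resp. `s^{l-1}`, in accordance with
`Φ_s(0^{k₁}1^{l₁}…) = s⁻ L(s)^{k₁-1} L(s)⁺ s^{l₁-1} …` and
`Φ_s(1^{k₁}0^{l₁}…) = L(s)⁺ s^{k₁-1} s⁻ L(s)^{l₁-1} …`. -/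
def subst (s r : List ℕ) : List ℕ :=
  match r with
  | [] => []
  | d :: rest => phiBlock s (1 - d) d ++ phiAux s d rest

/-- The substitution `Φ_s` on infinite sequences, as the limit of its values
on initial segments (each digit contributes a nonempty block, so the `i`-th letter
is determined by the first `i+1` digits). -/
def phiSeq (s : List ℕ) (c : ℕ → ℕ) : ℕ → ℕ :=
  fun i => (subst s (List.ofFn fun j : Fin (i + 1) => c j)).getD i 0

/-- `Λ_e(m) = {s₁ • s₂ • … • s_m : s₁ ∈ F_e, s₂,…,s_m ∈ F}`. -/
def LambdaE (m : ℕ) : Set (List ℕ) :=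
  {w | ∃ s₁ ∈ FareyExt, ∃ rs : List (List ℕ),
    rs.length = m - 1 ∧ (∀ r ∈ rs, r ∈ FareySet) ∧ w = rs.foldl subst s₁}

/-- `Λ_e = ∪_{m≥1} Λ_e(m)`. -/
def LambdaExt : Set (List ℕ) := ⋃ m ∈ Set.Ici 1, LambdaE m

/-- `β_ℓ^S`: the base `β > 1` with `(L(S)^∞)_β = 1` (it is unique since
`β ↦ (c)_β` is strictly decreasing). -/
def betaL (S : List ℕ) : ℝ :=
  Classical.epsilon fun β : ℝ => 1 < β ∧ valSeq β (perSeq (maxCyc S)) = 1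

/-- `β_*^S`: the base `β > 1` with `(L(S)⁺ S⁻ L(S)^∞)_β = 1`. -/
def betaStar (S : List ℕ) : ℝ :=
  Classical.epsilon fun β : ℝ =>
    1 < β ∧ valSeq β (wordSeq (wplus (maxCyc S) ++ wminus S) (perSeq (maxCyc S))) = 1

/-- `β_r^S`: the base `β > 1` with `(L(S)⁺ S^∞)_β = 1`. -/
def betaR (S : List ℕ) : ℝ :=
  Classical.epsilon fun β : ℝ => 1 < β ∧ valSeq β (wordSeq (wplus (maxCyc S)) (perSeq S)) = 1

/-- The Lyndon/Farey interval `J^S = [β_ℓ^S, β_r^S]`. -/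
def Jint (S : List ℕ) : Set ℝ := Set.Icc (betaL S) (betaR S)

/-- The basic interval `I^S = [β_ℓ^S, β_*^S]`. -/
def Iint (S : List ℕ) : Set ℝ := Set.Icc (betaL S) (betaStar S)

/-- The exceptional set `E = (1,∞) ∖ ∪_{s ∈ F_e} J^s`. -/
def Eexc : Set ℝ := Set.Ioi 1 \ ⋃ s ∈ FareyExt, Jint s

/-- The relative exceptional set `E^S = (J^S ∖ I^S) ∖ ∪_{r ∈ F} J^{S•r}`. -/
def EexcRel (S : List ℕ) : Set ℝ :=
  (Jint S \ Iint S) \ ⋃ r ∈ FareySet, Jint (subst S r)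

/-- The infinitely renormalizable set `E_∞ = ∩_{m≥1} ∪_{S ∈ Λ_e(m)} J^S`. -/
def Einf : Set ℝ := ⋂ m ∈ Set.Ici 1, ⋃ S ∈ LambdaE m, Jint S

/-- `E_L = E ∪ {β_ℓ^s : s ∈ F_e}`. -/
def EL : Set ℝ := Eexc ∪ {x | ∃ s ∈ FareyExt, x = betaL s}

/-- The critical value `τ(β) = min{t > 0 : dim_H K_β(t) = 0}`. -/
def tau (β : ℝ) : ℝ := sInf {t : ℝ | 0 < t ∧ dimH (survivor β t) = 0}

end

/-- `a` is the quasi-greedy expansion of `1` in base `β`: the lexicographically largest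
sequence over the alphabet `{0,1,…,⌈β⌉-1}` not ending in `0^∞` whose value is `1`. -/
def IsQuasiGreedyOne (β : ℝ) (a : ℕ → ℕ) : Prop :=
  (∀ i, a i ≤ ⌈β⌉₊ - 1) ∧ (∀ N : ℕ, ∃ i, N ≤ i ∧ a i ≠ 0) ∧ valSeq β a = 1 ∧
    ∀ b : ℕ → ℕ,
      ((∀ i, b i ≤ ⌈β⌉₊ - 1) ∧ (∀ N : ℕ, ∃ i, N ≤ i ∧ b i ≠ 0) ∧ valSeq β b = 1) →
      seqLe b a

/-! The sequence `α(β)` dominates all its shifts.  By a Parry-type comparison, a sequence that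
dominates its shifts and has value at least `1` in some base dominates every quasi-greedy expansion
of `1` in that base.  Hence `β ∉ J^s` forces `α(β) ≤ L(s)^∞` or `L(s)⁺ s^∞ ≤ α(β)`.

The Farey words are the lower Christoffel words of slope `p / q`, their largest rotations are the
upper Christoffel words, and `θ` adds `1` to the slope.  Descending the Farey tree from the slopes
`k - 1` and `k` therefore squeezes `α(β)` between sequences attached to two neighbouring fractions,
which agree on longer and longer prefixes.  So every prefix of `α(β)` is a prefix of an upper
Christoffel sequence of slope in `[k - 1, k]`, and its digits, being increments of the heights
`⌈i p / q⌉`, are `k - 1` or `k`.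
-/

/-! ### Lexicographic order on sequences -/

lemma seqLe_iff_toLex_le {x y : ℕ → ℕ} : seqLe x y ↔ toLex x ≤ toLex y :=
  (le_iff_eq_or_lt (a := toLex x) (b := toLex y)).symm

lemma toLex_le_of_sum_range_le {M : Type*} [AddCommMonoid M] [LinearOrder M]
    [IsOrderedCancelAddMonoid M] {x y : ℕ → M}
    (h : ∀ n, ∑ i ∈ Finset.range n, x i ≤ ∑ i ∈ Finset.range n, y i) : toLex x ≤ toLex y := by
  by_contra! hlt
  obtain ⟨n, heq, hn⟩ := hlt
  have hprefix : ∑ i ∈ Finset.range n, x i = ∑ i ∈ Finset.range n, y i :=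
    Finset.sum_congr rfl fun i hi => (heq i (Finset.mem_range.1 hi)).symm
  have hsum := h (n + 1)
  rw [Finset.sum_range_succ, Finset.sum_range_succ, hprefix] at hsum
  exact hn.not_ge (le_of_add_le_add_left hsum)

lemma eq_of_toLex_le_of_toLex_le {ι α : Type*} [LinearOrder ι] [WellFoundedLT ι] [LinearOrder α]
    {x y z : ι → α} {n : ι} (hxy : toLex x ≤ toLex y) (hyz : toLex y ≤ toLex z)
    (hxz : ∀ i < n, x i = z i) {i : ι} (hi : i < n) : y i = z i := by
  induction i using WellFoundedLT.induction with
  | ind i ih =>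
    have hyz' : ∀ j < i, y j = z j := fun j hj => ih j hj (hj.trans hi)
    refine le_antisymm (Pi.apply_le_of_toLex hyz hyz') ?_
    rw [← hxz i hi]
    exact Pi.apply_le_of_toLex hxy fun j hj => (hxz j (hj.trans hi)).trans (hyz' j hj).symm

lemma map_range_le_of_toLex_le {α : Type*} [LinearOrder α] {x y : ℕ → α}
    (h : toLex x ≤ toLex y) (q : ℕ) : (List.range q).map x ≤ (List.range q).map y := by
  rcases h.eq_or_lt with heq | ⟨n, heq, hlt⟩
  · rw [toLex_inj.1 heq]
  rcases lt_or_ge n q with hnq | hqn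
  · refine le_of_lt (List.lt_iff_exists.2 (Or.inr ⟨n, by simpa, by simpa, fun j hj => ?_, ?_⟩))
    · simpa using heq j hj
    · simpa using hlt
  · refine (List.map_congr_left fun i hi => heq i ?_).le
    exact (List.mem_range.1 hi).trans_le hqn

lemma shiftn_shiftn (m n : ℕ) (x : ℕ → ℕ) : shiftn n (shiftn m x) = shiftn (m + n) x := by
  funext i
  simp only [shiftn, add_assoc, add_comm n m]

lemma bddAbove_range_shiftn {x : ℕ → ℕ} (hx : BddAbove (range x)) (m : ℕ) :
    BddAbove (range (shiftn m x)) :=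
  hx.mono (range_comp_subset_range (· + m) x)

/-! ### Values of digit sequences -/

section Value

variable {β γ : ℝ} {x y : ℕ → ℕ}

lemma valSeq_nonneg (hβ : 0 ≤ β) (x : ℕ → ℕ) : 0 ≤ valSeq β x :=
  tsum_nonneg fun _ => by positivity

lemma hasSum_const_div_pow_succ (hβ : 1 < β) (c : ℝ) :
    HasSum (fun i : ℕ => c / β ^ (i + 1)) (c / (β - 1)) := by
  have hβ0 : β ≠ 0 := by linarith
  have hterm : ∀ i : ℕ, c / β ^ (i + 1) = c / β * β⁻¹ ^ i := fun i => by
    rw [inv_pow, pow_succ]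
    field_simp
  have hsum : c / (β - 1) = c / β * (1 - β⁻¹)⁻¹ := by
    rw [show 1 - β⁻¹ = (β - 1) / β by field_simp]
    field_simp
  simp only [hterm, hsum]
  exact (hasSum_geometric_of_lt_one (inv_nonneg.2 (zero_le_one.trans hβ.le))
    (inv_lt_one_of_one_lt₀ hβ)).mul_left (c / β)

lemma summable_valSeq (hβ : 1 < β) (hx : BddAbove (range x)) :
    Summable fun i : ℕ => (x i : ℝ) / β ^ (i + 1) := by
  obtain ⟨M, hM⟩ := hx
  refine .of_nonneg_of_le (fun i => by positivity) (fun i => ?_)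
    (hasSum_const_div_pow_succ hβ M).summable
  have : x i ≤ M := hM (mem_range_self i)
  gcongr

lemma valSeq_le_div_sub_one (hβ : 1 < β) {M : ℕ} (hM : ∀ i, x i ≤ M) :
    valSeq β x ≤ M / (β - 1) := by
  refine hasSum_le (fun i => ?_)
    (summable_valSeq hβ ⟨M, forall_mem_range.2 hM⟩).hasSum (hasSum_const_div_pow_succ hβ M)
  have := hM i
  gcongr

lemma valSeq_antitone_base (hβ : 1 < β) (hβγ : β ≤ γ) (hx : BddAbove (range x)) :
    valSeq γ x ≤ valSeq β x := by
  refine (summable_valSeq (hβ.trans_le hβγ) hx).tsum_le_tsum (fun i => ?_) (summable_valSeq hβ hx)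
  gcongr

lemma valSeq_eq_sum_range_add (hβ : 1 < β) (hx : BddAbove (range x)) (n : ℕ) :
    valSeq β x = ∑ i ∈ Finset.range n, (x i : ℝ) / β ^ (i + 1) +
      valSeq β (shiftn n x) / β ^ n := by
  rw [valSeq, ← (summable_valSeq hβ hx).sum_add_tsum_nat_add n, valSeq, ← tsum_div_const]
  simp only [shiftn, div_div, ← pow_add, add_right_comm]

lemma valSeq_pos (hβ : 1 < β) (hx : BddAbove (range x)) {i : ℕ} (hi : x i ≠ 0) :
    0 < valSeq β x := by
  have : 0 < x i := Nat.pos_of_ne_zero hi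
  exact (summable_valSeq hβ hx).tsum_pos (fun i => by positivity) i (by positivity)

lemma valSeq_shiftn_pos (hβ : 1 < β) (hx : BddAbove (range x)) (hx0 : ∃ᶠ i in atTop, x i ≠ 0)
    (m : ℕ) : 0 < valSeq β (shiftn m x) := by
  obtain ⟨i, hmi, hi⟩ := frequently_atTop.1 hx0 m
  refine valSeq_pos hβ (bddAbove_range_shiftn hx m) (i := i - m) ?_
  rwa [shiftn, Nat.sub_add_cancel hmi]

lemma exists_valSeq_add_le_of_toLex_lt (hβ : 1 < β) (hx : BddAbove (range x))
    (hy : BddAbove (range y)) (hxy : toLex x < toLex y) :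
    ∃ n, valSeq β x + (1 + valSeq β (shiftn (n + 1) y) - valSeq β (shiftn (n + 1) x)) / β ^ (n + 1)
      ≤ valSeq β y := by
  obtain ⟨n, heq, hlt⟩ := hxy
  refine ⟨n, ?_⟩
  have hdigit : (x n : ℝ) + 1 ≤ y n := by exact_mod_cast hlt
  have hprefix : ∑ i ∈ Finset.range n, (x i : ℝ) / β ^ (i + 1) =
      ∑ i ∈ Finset.range n, (y i : ℝ) / β ^ (i + 1) :=
    Finset.sum_congr rfl fun i hi => by
      rw [show x i = y i from heq i (Finset.mem_range.1 hi)]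
  rw [valSeq_eq_sum_range_add hβ hx (n + 1), valSeq_eq_sum_range_add hβ hy (n + 1),
    Finset.sum_range_succ, Finset.sum_range_succ, hprefix, add_assoc, add_assoc, add_assoc,
    ← add_div, ← add_div, ← add_div]
  gcongr _ + ?_ / _
  linarith

lemma valSeq_lt_valSeq_of_toLex_lt (hβ : 1 < β) (hx : BddAbove (range x))
    (hx1 : ∀ m, valSeq β (shiftn m x) ≤ 1) (hy : BddAbove (range y))
    (hy0 : ∃ᶠ i in atTop, y i ≠ 0) (hxy : toLex x < toLex y) : valSeq β x < valSeq β y := by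
  obtain ⟨n, hn⟩ := exists_valSeq_add_le_of_toLex_lt hβ hx hy hxy
  refine (lt_add_of_pos_right _ (div_pos ?_ (by positivity))).trans_le hn
  linarith [hx1 (n + 1), valSeq_shiftn_pos hβ hy hy0 (n + 1)]

lemma valSeq_shiftn_le_one_of_toLex_shiftn_le (hβ : 1 < β) (hx : BddAbove (range x))
    (hy : BddAbove (range y)) (hy1 : valSeq β y = 1)
    (hxy : ∀ m, toLex (shiftn m x) ≤ toLex y) (m : ℕ) : valSeq β (shiftn m x) ≤ 1 := by
  set S := ⨆ m, valSeq β (shiftn m x)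
  have hbdd : BddAbove (range fun m => valSeq β (shiftn m x)) := by
    obtain ⟨M, hM⟩ := hx
    exact ⟨M / (β - 1), forall_mem_range.2 fun m =>
      valSeq_le_div_sub_one hβ fun i => hM (mem_range_self (i + m))⟩
  have hle : ∀ m, valSeq β (shiftn m x) ≤ S := le_ciSup hbdd
  refine (hle m).trans ?_
  by_contra! hS
  have hcontract : S ≤ 1 + (S - 1) / β := by
    refine ciSup_le fun m => ?_
    rcases (hxy m).eq_or_lt with heq | hlt
    · rw [toLex_inj.1 heq, hy1, le_add_iff_nonneg_right]
      exact div_nonneg (by linarith) (by linarith)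
    obtain ⟨n, hn⟩ := exists_valSeq_add_le_of_toLex_lt hβ (bddAbove_range_shiftn hx m) hy hlt
    rw [shiftn_shiftn, hy1] at hn
    have hloss : -((S - 1) / β ^ (n + 1)) ≤ (1 + valSeq β (shiftn (n + 1) y) -
        valSeq β (shiftn (m + (n + 1)) x)) / β ^ (n + 1) := by
      rw [← neg_div]
      have := valSeq_nonneg (zero_le_one.trans hβ.le) (shiftn (n + 1) y)
      have := hle (m + (n + 1))
      gcongr
      linarith
    have hpow : (S - 1) / β ^ (n + 1) ≤ (S - 1) / β :=
      div_le_div_of_nonneg_left (by linarith) (by linarith)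
        (le_self_pow₀ hβ.le (Nat.succ_ne_zero n))
    linarith
  linarith [div_lt_self (sub_pos.2 hS) hβ]

lemma toLex_le_of_one_le_valSeq (hβ : 1 < β) (hx : BddAbove (range x))
    (hxmax : ∀ m, toLex (shiftn m x) ≤ toLex x) (hx1 : 1 ≤ valSeq β x)
    (hy : BddAbove (range y)) (hy0 : ∃ᶠ i in atTop, y i ≠ 0) (hy1 : valSeq β y = 1) :
    toLex y ≤ toLex x := by
  by_contra! hlt
  have hle := valSeq_shiftn_le_one_of_toLex_shiftn_le hβ hx hy hy1
    fun m => (hxmax m).trans hlt.le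
  linarith [valSeq_lt_valSeq_of_toLex_lt hβ hx hle hy hy0 hlt]

lemma one_le_valSeq_two (hx : BddAbove (range x)) (hx0 : ∀ i, x i ≠ 0) : 1 ≤ valSeq 2 x := by
  have hone := hasSum_const_div_pow_succ one_lt_two (1 : ℝ)
  norm_num only at hone
  refine hasSum_le (fun i => ?_) hone (summable_valSeq one_lt_two hx).hasSum
  have : (1 : ℝ) ≤ x i := mod_cast Nat.one_le_iff_ne_zero.2 (hx0 i)
  gcongr

lemma continuousOn_valSeq (hγ : 1 < γ) (hx : BddAbove (range x)) :
    ContinuousOn (fun β => valSeq β x) (Ici γ) := by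
  refine continuousOn_tsum (fun i => ?_) (summable_valSeq hγ hx) fun i β hβ => ?_
  · refine continuousOn_const.div (by fun_prop) fun β hβ => ?_
    exact pow_ne_zero _ (by linarith [mem_Ici.1 hβ])
  · have hγβ : γ ≤ β := hβ
    rw [Real.norm_of_nonneg (div_nonneg (Nat.cast_nonneg _) (pow_nonneg (by linarith) _))]
    gcongr

lemma exists_valSeq_eq_one (hγ : 1 < γ) (hx : BddAbove (range x)) (hx1 : 1 ≤ valSeq γ x) :
    ∃ β, γ ≤ β ∧ valSeq β x = 1 := by
  obtain ⟨M, hM⟩ := id hx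
  have htop : valSeq (γ + M) x ≤ 1 := by
    have hMγ : (M : ℝ) < γ + M - 1 := by linarith
    refine (valSeq_le_div_sub_one (by linarith [M.cast_nonneg (α := ℝ)])
      fun i => hM (mem_range_self i)).trans ?_
    exact div_le_one_of_le₀ hMγ.le (M.cast_nonneg.trans hMγ.le)
  obtain ⟨β, hβ, hval⟩ := intermediate_value_Icc' (le_add_of_nonneg_right M.cast_nonneg)
    ((continuousOn_valSeq hγ hx).mono Icc_subset_Ici_self) ⟨htop, hx1⟩
  exact ⟨β, hβ.1, hval⟩

end Value

/-! ### The quasi-greedy algorithm -/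

/-- The quasi-greedy transformation of `(0, 1]`, the left-continuous companion of the
β-transformation.  The natural subtraction is exact there, since `0 < β x`. -/
noncomputable def quasiGreedyMap (β x : ℝ) : ℝ := β * x - (⌈β * x⌉₊ - 1 : ℕ)

/-- The quasi-greedy expansion `a(x, β)`, given by the digits that `quasiGreedyMap` subtracts. -/
noncomputable def quasiGreedy (β x : ℝ) (n : ℕ) : ℕ := ⌈β * (quasiGreedyMap β)^[n] x⌉₊ - 1

section QuasiGreedy

variable {β x y : ℝ}

lemma quasiGreedyMap_mem_Ioc (h : 0 < β * x) : quasiGreedyMap β x ∈ Ioc (0 : ℝ) 1 := by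
  rw [quasiGreedyMap, Nat.cast_sub (Nat.ceil_pos.2 h), Nat.cast_one]
  constructor <;> linarith [Nat.le_ceil (β * x), Nat.ceil_lt_add_one h.le]

lemma iterate_quasiGreedyMap_mem_Ioc (hβ : 0 < β) (hx : x ∈ Ioc (0 : ℝ) 1) (n : ℕ) :
    (quasiGreedyMap β)^[n] x ∈ Ioc (0 : ℝ) 1 :=
  MapsTo.iterate (fun _ hy => quasiGreedyMap_mem_Ioc (mul_pos hβ hy.1)) n hx

lemma shiftn_quasiGreedy (β x : ℝ) (m : ℕ) :
    shiftn m (quasiGreedy β x) = quasiGreedy β ((quasiGreedyMap β)^[m] x) := by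
  funext i
  rw [shiftn, quasiGreedy, quasiGreedy, Function.iterate_add_apply]

lemma quasiGreedy_le (hβ : 0 < β) (hx : x ∈ Ioc (0 : ℝ) 1) (n : ℕ) :
    quasiGreedy β x n ≤ ⌈β⌉₊ - 1 :=
  Nat.sub_le_sub_right (Nat.ceil_mono
    (mul_le_of_le_one_right hβ.le (iterate_quasiGreedyMap_mem_Ioc hβ hx n).2)) 1

lemma bddAbove_range_quasiGreedy (hβ : 0 < β) (hx : x ∈ Ioc (0 : ℝ) 1) :
    BddAbove (range (quasiGreedy β x)) :=
  ⟨_, forall_mem_range.2 (quasiGreedy_le hβ hx)⟩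

lemma sum_range_quasiGreedy (hβ : β ≠ 0) (x : ℝ) (n : ℕ) :
    ∑ i ∈ Finset.range n, (quasiGreedy β x i : ℝ) / β ^ (i + 1) =
      x - (quasiGreedyMap β)^[n] x / β ^ n := by
  induction n with
  | zero => simp
  | succ n ih =>
    rw [Finset.sum_range_succ, ih, Function.iterate_succ_apply', quasiGreedyMap, quasiGreedy]
    field_simp
    ring

lemma valSeq_quasiGreedy (hβ : 1 < β) (hx : x ∈ Ioc (0 : ℝ) 1) :
    valSeq β (quasiGreedy β x) = x := by
  have hβ0 : 0 < β := zero_lt_one.trans hβ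
  have hmem := iterate_quasiGreedyMap_mem_Ioc hβ0 hx
  refine HasSum.tsum_eq ((hasSum_iff_tendsto_nat_of_nonneg (fun i => by positivity) x).2 ?_)
  simp only [sum_range_quasiGreedy hβ0.ne']
  simpa using tendsto_const_nhds.sub (tendsto_bdd_div_atTop_nhds_zero
    (.of_forall fun n => (hmem n).1.le) (.of_forall fun n => (hmem n).2)
    (tendsto_pow_atTop_atTop_of_one_lt hβ))

lemma valSeq_shiftn_quasiGreedy (hβ : 1 < β) (hx : x ∈ Ioc (0 : ℝ) 1) (m : ℕ) :
    valSeq β (shiftn m (quasiGreedy β x)) = (quasiGreedyMap β)^[m] x := by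
  rw [shiftn_quasiGreedy,
    valSeq_quasiGreedy hβ (iterate_quasiGreedyMap_mem_Ioc (zero_lt_one.trans hβ) hx m)]

lemma frequently_quasiGreedy_ne_zero (hβ : 1 < β) (hx : x ∈ Ioc (0 : ℝ) 1) :
    ∃ᶠ i in atTop, quasiGreedy β x i ≠ 0 := by
  rw [frequently_atTop]
  intro m
  by_contra! hzero
  refine (iterate_quasiGreedyMap_mem_Ioc (zero_lt_one.trans hβ) hx m).1.ne' ?_
  rw [← valSeq_shiftn_quasiGreedy hβ hx]
  simp [valSeq, shiftn, fun i => hzero (i + m) (Nat.le_add_left m i)]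

lemma valSeq_lt_of_quasiGreedy_lt (hβ : 1 < β) (hx : x ∈ Ioc (0 : ℝ) 1) {c : ℕ → ℕ}
    (hc : BddAbove (range c)) (hc0 : ∃ᶠ i in atTop, c i ≠ 0)
    (h : toLex (quasiGreedy β x) < toLex c) : x < valSeq β c := by
  have hβ0 : 0 < β := zero_lt_one.trans hβ
  have hlt := valSeq_lt_valSeq_of_toLex_lt hβ (bddAbove_range_quasiGreedy hβ0 hx) (fun m => by
    rw [valSeq_shiftn_quasiGreedy hβ hx]
    exact (iterate_quasiGreedyMap_mem_Ioc hβ0 hx m).2) hc hc0 h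
  rwa [valSeq_quasiGreedy hβ hx] at hlt

lemma toLex_quasiGreedy_mono (hβ : 1 < β) (hx : x ∈ Ioc (0 : ℝ) 1) (hy : y ∈ Ioc (0 : ℝ) 1)
    (hxy : x ≤ y) : toLex (quasiGreedy β x) ≤ toLex (quasiGreedy β y) := by
  by_contra! hlt
  have hyx := valSeq_lt_of_quasiGreedy_lt hβ hy
    (bddAbove_range_quasiGreedy (zero_lt_one.trans hβ) hx)
    (frequently_quasiGreedy_ne_zero hβ hx) hlt
  rw [valSeq_quasiGreedy hβ hx] at hyx
  exact hyx.not_ge hxy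

lemma toLex_shiftn_quasiGreedy_one_le (hβ : 1 < β) (m : ℕ) :
    toLex (shiftn m (quasiGreedy β 1)) ≤ toLex (quasiGreedy β 1) := by
  have hmem := iterate_quasiGreedyMap_mem_Ioc (zero_lt_one.trans hβ) (right_mem_Ioc.2 one_pos) m
  rw [shiftn_quasiGreedy]
  exact toLex_quasiGreedy_mono hβ hmem (right_mem_Ioc.2 one_pos) hmem.2

lemma IsQuasiGreedyOne.eq_quasiGreedy {a : ℕ → ℕ} (ha : IsQuasiGreedyOne β a) (hβ : 1 < β) :
    a = quasiGreedy β 1 := by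
  obtain ⟨hdigit, hinf, hval, hmax⟩ := ha
  have hone : (1 : ℝ) ∈ Ioc (0 : ℝ) 1 := right_mem_Ioc.2 one_pos
  have hle : toLex (quasiGreedy β 1) ≤ toLex a := seqLe_iff_toLex_le.1 <|
    hmax _ ⟨quasiGreedy_le (zero_lt_one.trans hβ) hone,
      frequently_atTop.1 (frequently_quasiGreedy_ne_zero hβ hone), valSeq_quasiGreedy hβ hone⟩
  refine (toLex_inj.1 (hle.eq_of_not_lt fun hlt => ?_)).symm
  exact (valSeq_lt_of_quasiGreedy_lt hβ hone ⟨_, forall_mem_range.2 hdigit⟩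
    (frequently_atTop.2 hinf) hlt).ne' hval

end QuasiGreedy

/-! ### Heights and their increments -/

section Heights

variable {p q : ℕ} {h g : ℕ → ℕ}

/-- The sequence of successive increments of a height function; the truncated subtraction is exact
for the monotone heights used here. -/
def increments (h : ℕ → ℕ) (i : ℕ) : ℕ := h (i + 1) - h i

/-- The heights `⌊i p / q⌋` of the lattice path just below the line of slope `p / q`. -/
def lowerHeight (p q i : ℕ) : ℕ := i * p / q

/-- The heights `⌈i p / q⌉` of the lattice path just above the line of slope `p / q`. -/
def upperHeight (p q i : ℕ) : ℕ := (i * p) ⌈/⌉ q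

/-- The limit of the heights `⌈i ρ⌉` as the slope `ρ` decreases to `p / q`. -/
def upperHeightRight (p q i : ℕ) : ℕ := if i = 0 then 0 else i * p / q + 1

lemma shiftn_increments (m : ℕ) (h : ℕ → ℕ) :
    shiftn m (increments h) = increments (shiftn m h) := by
  funext i
  simp only [shiftn, increments, add_right_comm]

lemma monotone_shiftn (hh : Monotone h) (m : ℕ) : Monotone (shiftn m h) :=
  fun _ _ hij => hh (Nat.add_le_add_right hij m)

lemma periodic_increments (hh : ∀ i, h (i + q) = h i + p) :
    Function.Periodic (increments h) q := fun i => by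
  simp only [increments, add_right_comm i q 1, hh, Nat.add_sub_add_right]

lemma toLex_increments_le (hh : Monotone h) (hg : Monotone g)
    (hle : ∀ n, h n + g 0 ≤ g n + h 0) : toLex (increments h) ≤ toLex (increments g) := by
  refine toLex_le_of_sum_range_le fun n => ?_
  simp only [increments, Finset.sum_range_tsub hh, Finset.sum_range_tsub hg]
  have := hle n
  have := hg n.zero_le
  omega

lemma bddAbove_range_of_periodic {x : ℕ → ℕ} (hq : 0 < q) (hx : Function.Periodic x q) :
    BddAbove (range x) := by
  refine ((finite_Iio q).image x).bddAbove.mono (range_subset_iff.2 fun i => ?_)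
  exact ⟨i % q, Nat.mod_lt i hq, hx.map_mod_nat i⟩

lemma upperHeight_le_iff (hq : 0 < q) {i t : ℕ} : upperHeight p q i ≤ t ↔ i * p ≤ q * t :=
  ceilDiv_le_iff_le_mul hq

lemma mul_le_mul_upperHeight (hq : 0 < q) (p i : ℕ) : i * p ≤ q * upperHeight p q i :=
  (upperHeight_le_iff hq).1 le_rfl

lemma upperHeight_zero (hq : 0 < q) (p : ℕ) : upperHeight p q 0 = 0 :=
  Nat.le_zero.1 ((upperHeight_le_iff hq).2 (by simp))

lemma monotone_lowerHeight (p q : ℕ) : Monotone (lowerHeight p q) := fun i j hij => by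
  unfold lowerHeight
  gcongr

lemma monotone_upperHeight (hq : 0 < q) (p : ℕ) : Monotone (upperHeight p q) := fun _ j hij =>
  (upperHeight_le_iff hq).2 ((Nat.mul_le_mul_right p hij).trans (mul_le_mul_upperHeight hq p j))

lemma upperHeight_add_le (hq : 0 < q) (p i j : ℕ) :
    upperHeight p q (i + j) ≤ upperHeight p q i + upperHeight p q j := by
  rw [upperHeight_le_iff hq, add_mul, mul_add]
  exact Nat.add_le_add (mul_le_mul_upperHeight hq p i) (mul_le_mul_upperHeight hq p j)

lemma lowerHeight_add_le (hq : 0 < q) (p i j : ℕ) :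
    lowerHeight p q (i + j) ≤ upperHeight p q i + lowerHeight p q j := by
  calc (i + j) * p / q ≤ (j * p + q * upperHeight p q i) / q := by
        gcongr
        linarith [mul_le_mul_upperHeight hq p i]
    _ = upperHeight p q i + j * p / q := by rw [Nat.add_mul_div_left _ _ hq, add_comm]

lemma lowerHeight_add_period (hq : 0 < q) (p i : ℕ) :
    lowerHeight p q (i + q) = lowerHeight p q i + p := by
  rw [lowerHeight, add_mul, Nat.add_mul_div_left _ _ hq, lowerHeight]

lemma upperHeight_add_period (hq : 0 < q) (p i : ℕ) :
    upperHeight p q (i + q) = upperHeight p q i + p := by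
  simp only [upperHeight, Nat.ceilDiv_eq_add_pred_div]
  rw [← Nat.add_mul_div_left _ _ hq]
  congr 1
  rw [add_mul]
  omega

lemma lowerHeight_self (hq : 0 < q) (p : ℕ) : lowerHeight p q q = p :=
  Nat.mul_div_cancel_left p hq

lemma upperHeight_self (hq : 0 < q) (p : ℕ) : upperHeight p q q = p := by
  simpa [upperHeight_zero hq] using upperHeight_add_period hq p 0

lemma periodic_increments_lowerHeight (hq : 0 < q) (p : ℕ) :
    Function.Periodic (increments (lowerHeight p q)) q :=
  periodic_increments (lowerHeight_add_period hq p)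

lemma periodic_increments_upperHeight (hq : 0 < q) (p : ℕ) :
    Function.Periodic (increments (upperHeight p q)) q :=
  periodic_increments (upperHeight_add_period hq p)

lemma toLex_shiftn_increments_lowerHeight_le (hq : 0 < q) (p m : ℕ) :
    toLex (shiftn m (increments (lowerHeight p q))) ≤ toLex (increments (upperHeight p q)) := by
  rw [shiftn_increments]
  refine toLex_increments_le (monotone_shiftn (monotone_lowerHeight p q) m)
    (monotone_upperHeight hq p) fun n => ?_
  simpa [shiftn, upperHeight_zero hq] using lowerHeight_add_le hq p n m

lemma toLex_shiftn_increments_upperHeight_le (hq : 0 < q) (p m : ℕ) :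
    toLex (shiftn m (increments (upperHeight p q))) ≤ toLex (increments (upperHeight p q)) := by
  rw [shiftn_increments]
  refine toLex_increments_le (monotone_shiftn (monotone_upperHeight hq p) m)
    (monotone_upperHeight hq p) fun n => ?_
  simpa [shiftn, upperHeight_zero hq] using upperHeight_add_le hq p n m

lemma le_increments_lowerHeight (hq : 0 < q) {r : ℕ} (hr : r * q ≤ p) (i : ℕ) :
    r ≤ increments (lowerHeight p q) i := by
  refine Nat.le_sub_of_add_le' ?_
  rw [lowerHeight, lowerHeight, ← Nat.add_mul_div_right _ _ hq, add_one_mul]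
  gcongr

lemma le_increments_upperHeight (hq : 0 < q) {r : ℕ} (hr : r * q ≤ p) (i : ℕ) :
    r ≤ increments (upperHeight p q) i := by
  refine Nat.le_sub_of_add_le' ?_
  simp only [upperHeight, Nat.ceilDiv_eq_add_pred_div]
  rw [← Nat.add_mul_div_right _ _ hq]
  gcongr
  rw [add_one_mul]
  omega

lemma increments_upperHeight_le (hq : 0 < q) {r : ℕ} (hr : p ≤ r * q) (i : ℕ) :
    increments (upperHeight p q) i ≤ r := by
  have hone : upperHeight p q 1 ≤ r := (upperHeight_le_iff hq).2 (by linarith)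
  have := upperHeight_add_le hq p i 1
  rw [increments]
  omega

lemma upperHeightRight_of_pos {i : ℕ} (hi : 0 < i) (p q : ℕ) :
    upperHeightRight p q i = lowerHeight p q i + 1 :=
  if_neg hi.ne'

lemma increments_upperHeightRight (p q i : ℕ) :
    increments (upperHeightRight p q) i =
      increments (lowerHeight p q) i + if i = 0 then 1 else 0 := by
  rcases i.eq_zero_or_pos with rfl | hi
  · simp [increments, upperHeightRight, lowerHeight]
  · simp only [increments, upperHeightRight_of_pos, hi, hi.ne', Nat.succ_pos, if_false]
    omega

lemma bddAbove_range_increments_upperHeightRight (hq : 0 < q) (p : ℕ) :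
    BddAbove (range (increments (upperHeightRight p q))) := by
  obtain ⟨M, hM⟩ := bddAbove_range_of_periodic hq (periodic_increments_lowerHeight hq p)
  refine ⟨M + 1, forall_mem_range.2 fun i => ?_⟩
  rw [increments_upperHeightRight]
  exact Nat.add_le_add (hM (mem_range_self i)) (by split_ifs <;> simp)

lemma upperHeight_eq_lowerHeight_add_one (hpq : p.Coprime q) {i : ℕ} (hi : 0 < i) (hiq : i < q) :
    upperHeight p q i = lowerHeight p q i + 1 := by
  have hq : 0 < q := hi.trans hiq
  have hlt : i * p / q * q < i * p := by
    refine (Nat.div_mul_le_self _ _).lt_of_ne fun heq => (Nat.le_of_dvd hi ?_).not_gt hiq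
    exact hpq.symm.dvd_of_dvd_mul_right (Dvd.intro_left _ heq)
  refine le_antisymm ((upperHeight_le_iff hq).2 ?_) (Nat.succ_le_of_lt (not_le.1 fun hle => ?_))
  · exact (Nat.lt_mul_div_succ _ hq).le
  · rw [upperHeight_le_iff hq, lowerHeight, mul_comm q] at hle
    exact hle.not_gt hlt

lemma upperHeightRight_eq_upperHeight (hpq : p.Coprime q) {i : ℕ} (hiq : i < q) :
    upperHeightRight p q i = upperHeight p q i := by
  rcases i.eq_zero_or_pos with rfl | hi
  · rw [upperHeight_zero hiq, upperHeightRight, if_pos rfl]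
  · rw [upperHeightRight_of_pos hi, upperHeight_eq_lowerHeight_add_one hpq hi hiq]

lemma lowerHeight_add_of_mul_add_one_eq (hq : 0 < q) {m l : ℕ} (h : m * p + 1 = l * q) (i : ℕ) :
    lowerHeight p q (i + m) + 1 = upperHeight p q i + l := by
  rw [lowerHeight, upperHeight, Nat.ceilDiv_eq_add_pred_div, ← Nat.add_div_right _ hq,
    ← Nat.add_mul_div_right _ _ hq, add_mul, ← h]
  congr 1
  omega

lemma upperHeight_add_of_mul_eq_add_one (hq : 0 < q) {m l : ℕ} (h : m * p = l * q + 1) (i : ℕ) :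
    upperHeight p q (i + m) = lowerHeight p q i + (l + 1) := by
  rw [lowerHeight, upperHeight, Nat.ceilDiv_eq_add_pred_div, ← Nat.add_mul_div_right _ _ hq,
    add_mul, h, add_one_mul]
  congr 1
  omega

/-- With `a = q₁ s - i p₁` and `b = q₂ s - i p₂` the determinant condition reads
`i = q₂ a - q₁ b`, so `a ≥ 1` and `b ≤ -1` would force `i ≥ q₁ + q₂`. -/
lemma upperHeight_eq_upperHeightRight {p₁ q₁ p₂ q₂ : ℕ} (h₁ : 0 < q₁) (h₂ : 0 < q₂)
    (hdet : p₂ * q₁ = p₁ * q₂ + 1) {i : ℕ} (hi : i < q₁ + q₂) :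
    upperHeight p₂ q₂ i = upperHeightRight p₁ q₁ i := by
  rcases i.eq_zero_or_pos with rfl | hpos
  · rw [upperHeight_zero h₂, upperHeightRight, if_pos rfl]
  refine eq_of_forall_ge_iff fun s => ?_
  rw [upperHeightRight_of_pos hpos, upperHeight_le_iff h₂, Nat.succ_le_iff, lowerHeight,
    Nat.div_lt_iff_lt_mul h₁]
  zify at *
  have hdiff : (i : ℤ) = q₂ * (s * q₁ - i * p₁) - q₁ * (q₂ * s - i * p₂) := by
    linear_combination (-(i : ℤ)) * hdet
  constructor
  · intro hb
    by_contra! ha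
    nlinarith
  · intro ha
    by_contra! hb
    nlinarith

section Mediant

variable {p₁ q₁ p₂ q₂ : ℕ}

lemma coprime_of_mul_eq_mul_add_one (hdet : p₂ * q₁ = p₁ * q₂ + 1) : p₂.Coprime q₂ := by
  refine Nat.isCoprime_iff_coprime.1 ⟨q₁, -p₁, ?_⟩
  zify at hdet
  linear_combination hdet

lemma mediant_left_det (hdet : p₂ * q₁ = p₁ * q₂ + 1) :
    (p₁ + p₂) * q₁ = p₁ * (q₁ + q₂) + 1 := by
  linear_combination hdet

lemma mediant_right_det (hdet : p₂ * q₁ = p₁ * q₂ + 1) :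
    p₂ * (q₁ + q₂) = (p₁ + p₂) * q₂ + 1 := by
  linear_combination hdet

lemma coprime_mediant (hdet : p₂ * q₁ = p₁ * q₂ + 1) : (p₁ + p₂).Coprime (q₁ + q₂) :=
  coprime_of_mul_eq_mul_add_one (mediant_left_det hdet)

lemma lowerHeight_mediant_of_le (h₁ : 0 < q₁) (h₂ : 0 < q₂) (hdet : p₂ * q₁ = p₁ * q₂ + 1)
    {i : ℕ} (hi : i ≤ q₁) : lowerHeight (p₁ + p₂) (q₁ + q₂) i = lowerHeight p₁ q₁ i := by
  rcases i.eq_zero_or_pos with rfl | hpos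
  · simp only [lowerHeight, zero_mul, Nat.zero_div]
  have hnext := upperHeight_eq_upperHeightRight h₁ (Nat.add_pos_left h₁ q₂)
    (mediant_left_det hdet) (show i < q₁ + (q₁ + q₂) by omega)
  rwa [upperHeightRight_of_pos hpos,
    upperHeight_eq_lowerHeight_add_one (coprime_mediant hdet) hpos (by omega),
    Nat.add_right_cancel_iff] at hnext

lemma lowerHeight_mediant_add (h₁ : 0 < q₁) (h₂ : 0 < q₂) (hdet : p₂ * q₁ = p₁ * q₂ + 1)
    {i : ℕ} (hi : i ≤ q₂) :
    lowerHeight (p₁ + p₂) (q₁ + q₂) (i + q₁) = lowerHeight p₂ q₂ i + p₁ := by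
  have hpos : 0 < q₁ + q₂ := Nat.add_pos_left h₁ q₂
  rcases i.eq_zero_or_pos with rfl | hi0
  · rw [zero_add, lowerHeight_mediant_of_le h₁ h₂ hdet le_rfl, lowerHeight_self h₁]
    simp only [lowerHeight, zero_mul, Nat.zero_div, zero_add]
  rcases hi.eq_or_lt with rfl | hi
  · rw [add_comm i, lowerHeight_self hpos, lowerHeight_self h₂, add_comm]
  have hshift := upperHeight_add_of_mul_eq_add_one hpos
    ((mul_comm q₁ _).trans (mediant_left_det hdet)) i
  have hnext := upperHeight_eq_upperHeightRight hpos h₂ (mediant_right_det hdet)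
    (show i < q₁ + q₂ + q₂ by omega)
  rw [upperHeight_eq_lowerHeight_add_one (coprime_mediant hdet) (by omega) (by omega)] at hshift
  rw [upperHeightRight_of_pos hi0, upperHeight_eq_lowerHeight_add_one
    (coprime_of_mul_eq_mul_add_one hdet) hi0 hi] at hnext
  omega

end Mediant

end Heights

/-! ### Christoffel words -/

section Christoffel

/-- The lower Christoffel word of slope `p / q`.  Slopes above `1` are allowed, so that
`θ` acts by adding `1` to the slope. -/
def lowerChristoffel (p q : ℕ) : List ℕ := (List.range q).map (increments (lowerHeight p q))

/-- The upper Christoffel word of slope `p / q`. -/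
def upperChristoffel (p q : ℕ) : List ℕ := (List.range q).map (increments (upperHeight p q))

variable {p q : ℕ} {x : ℕ → ℕ}

lemma rotate_map_range (hx : Function.Periodic x q) (m : ℕ) :
    ((List.range q).map x).rotate m = (List.range q).map (shiftn m x) := by
  refine List.ext_getElem (by simp) fun i _ _ => ?_
  simp [List.getElem_rotate, shiftn, hx.map_mod_nat]

lemma perSeq_map_range (hq : 0 < q) (hx : Function.Periodic x q) :
    perSeq ((List.range q).map x) = x := by
  funext i
  simp [perSeq, List.getD_eq_getElem?_getD, Nat.mod_lt i hq, hx.map_mod_nat]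

lemma wordSeq_map_range_shiftn (q : ℕ) (x : ℕ → ℕ) :
    wordSeq ((List.range q).map x) (shiftn q x) = x := by
  funext i
  rcases lt_or_ge i q with hi | hi
  · simp [wordSeq, List.getD_eq_getElem?_getD, hi]
  · simp [wordSeq, shiftn, hi.not_gt, Nat.sub_add_cancel hi]

lemma wplus_map_range_succ {y : ℕ → ℕ} {n : ℕ} (hlt : ∀ i < n, y i = x i) (hn : y n = x n + 1) :
    wplus ((List.range (n + 1)).map x) = (List.range (n + 1)).map y := by
  have hmap : (List.range n).map x = (List.range n).map y :=
    List.map_congr_left fun i hi => (hlt i (List.mem_range.1 hi)).symm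
  simp [wplus, List.range_succ, hn, hmap]

lemma maxCyc_eq_rotate {w : List ℕ} {m : ℕ} (hm : m < w.length)
    (hmax : ∀ j, w.rotate j ≤ w.rotate m) : maxCyc w = w.rotate m := by
  have hmem : w.rotate m ∈ (List.range w.length).map w.rotate :=
    List.mem_map_of_mem (List.mem_range.2 hm)
  refine Option.some_injective _ (List.max?_cons'.symm.trans (List.max?_eq_some_iff.2 ⟨?_, ?_⟩))
  · exact List.mem_cons_of_mem _ hmem
  · rintro v hv
    rcases List.mem_cons.1 hv with rfl | hv
    · exact not_lt.1 (List.not_lt_nil _)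
    · obtain ⟨j, -, rfl⟩ := List.mem_map.1 hv
      exact hmax j

lemma exists_mul_add_one_eq_mul (hq : 0 < q) (hpq : p.Coprime q) :
    ∃ m < q, ∃ l, m * p + 1 = l * q := by
  obtain ⟨m, hm, hmod⟩ := Nat.exists_mul_mod_eq_of_coprime (q - 1) hpq hq.ne'
  have hdvd : q ∣ p * m + 1 := by
    rw [Nat.dvd_iff_mod_eq_zero, Nat.add_mod, hmod, ← Nat.add_mod, Nat.sub_add_cancel hq,
      Nat.mod_self]
  obtain ⟨l, hl⟩ := hdvd
  exact ⟨m, hm, l, by rw [mul_comm m, hl, mul_comm]⟩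

lemma maxCyc_lowerChristoffel (hq : 0 < q) (hpq : p.Coprime q) :
    maxCyc (lowerChristoffel p q) = upperChristoffel p q := by
  obtain ⟨m, hm, l, hml⟩ := exists_mul_add_one_eq_mul hq hpq
  have hrot := rotate_map_range (periodic_increments_lowerHeight hq p)
  have hupper : (lowerChristoffel p q).rotate m = upperChristoffel p q := by
    refine (hrot m).trans (List.map_congr_left fun i _ => ?_)
    have := lowerHeight_add_of_mul_add_one_eq hq hml i
    have := lowerHeight_add_of_mul_add_one_eq hq hml (i + 1)
    simp only [shiftn, increments, add_right_comm i m 1]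
    omega
  rw [← hupper]
  refine maxCyc_eq_rotate (by simpa [lowerChristoffel]) fun j => ?_
  rw [hupper, lowerChristoffel, hrot]
  exact map_range_le_of_toLex_le (toLex_shiftn_increments_lowerHeight_le hq p j) q

lemma perSeq_lowerChristoffel (hq : 0 < q) (p : ℕ) :
    perSeq (lowerChristoffel p q) = increments (lowerHeight p q) :=
  perSeq_map_range hq (periodic_increments_lowerHeight hq p)

lemma perSeq_upperChristoffel (hq : 0 < q) (p : ℕ) :
    perSeq (upperChristoffel p q) = increments (upperHeight p q) :=
  perSeq_map_range hq (periodic_increments_upperHeight hq p)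

lemma wplus_upperChristoffel (hq : 0 < q) (hpq : p.Coprime q) :
    wplus (upperChristoffel p q) = (List.range q).map (increments (upperHeightRight p q)) := by
  obtain ⟨n, rfl⟩ : ∃ n, q = n + 1 := Nat.exists_eq_succ_of_ne_zero hq.ne'
  have heq : ∀ i ≤ n, upperHeightRight p (n + 1) i = upperHeight p (n + 1) i := fun i hi =>
    upperHeightRight_eq_upperHeight hpq (Nat.lt_succ_of_le hi)
  refine wplus_map_range_succ (fun i hi => ?_) ?_
  · rw [increments, increments, heq i hi.le, heq (i + 1) hi]
  · have := monotone_upperHeight hq p (Nat.le_add_right n 1)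
    rw [increments, increments, heq n le_rfl, upperHeightRight_of_pos hq, lowerHeight_self hq,
      upperHeight_self hq]
    rw [upperHeight_self hq] at this
    omega

lemma wordSeq_wplus_upperChristoffel (hq : 0 < q) (hpq : p.Coprime q) :
    wordSeq (wplus (upperChristoffel p q)) (perSeq (lowerChristoffel p q)) =
      increments (upperHeightRight p q) := by
  have htail : increments (lowerHeight p q) = shiftn q (increments (upperHeightRight p q)) := by
    funext i
    rw [shiftn, increments_upperHeightRight, periodic_increments_lowerHeight hq p i,
      if_neg (Nat.add_pos_right i hq).ne', add_zero]
  rw [wplus_upperChristoffel hq hpq, perSeq_lowerChristoffel hq, htail, wordSeq_map_range_shiftn]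

lemma lowerChristoffel_append {p₁ q₁ p₂ q₂ : ℕ} (h₁ : 0 < q₁) (h₂ : 0 < q₂)
    (hdet : p₂ * q₁ = p₁ * q₂ + 1) :
    lowerChristoffel p₁ q₁ ++ lowerChristoffel p₂ q₂ = lowerChristoffel (p₁ + p₂) (q₁ + q₂) := by
  have hleft := @lowerHeight_mediant_of_le _ _ _ _ h₁ h₂ hdet
  have hright := @lowerHeight_mediant_add _ _ _ _ h₁ h₂ hdet
  rw [lowerChristoffel, lowerChristoffel, lowerChristoffel, List.range_add, List.map_append,
    List.map_map]
  congr 1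
  · refine List.map_congr_left fun i hi => ?_
    have := List.mem_range.1 hi
    rw [increments, increments, hleft this.le, hleft this]
  · refine List.map_congr_left fun i hi => ?_
    have := List.mem_range.1 hi
    rw [Function.comp, increments, increments, add_comm q₁ i, add_right_comm i q₁, hright this.le,
      hright this, Nat.add_sub_add_right]

end Christoffel

/-! ### Farey words -/

lemma fareyInsert_cons_prefix (u v : List ℕ) (t : List (List ℕ)) :
    [u, u ++ v, v] <+: fareyInsert (u :: v :: t) := by
  cases t <;> simp [fareyInsert]

lemma infix_fareyInsert {u v : List ℕ} {l : List (List ℕ)} (h : [u, v] <:+: l) :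
    [u, u ++ v, v] <:+: fareyInsert l := by
  induction l using fareyInsert.induct with
  | case1 => simpa using h.length_le
  | case2 => simpa using h.length_le
  | case3 w x t ih =>
    rcases List.infix_cons_iff.1 h with hpre | hinf
    · obtain ⟨rfl, htail⟩ := List.cons_prefix_cons.1 hpre
      obtain ⟨rfl, -⟩ := List.cons_prefix_cons.1 htail
      exact (fareyInsert_cons_prefix u v t).isInfix
    · exact (ih hinf).trans (List.suffix_append [w, w ++ x] _).isInfix

lemma theta_iterate_eq_map (r : ℕ) (w : List ℕ) : theta^[r] w = w.map (· + r) := by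
  induction r with
  | zero => simp
  | succ r ih =>
    rw [Function.iterate_succ_apply', ih, theta, List.map_map]
    rfl

lemma theta_iterate_lowerChristoffel {q : ℕ} (hq : 0 < q) (p r : ℕ) :
    theta^[r] (lowerChristoffel p q) = lowerChristoffel (p + r * q) q := by
  have hheight : ∀ i, lowerHeight (p + r * q) q i = lowerHeight p q i + i * r := fun i => by
    rw [lowerHeight, mul_add, ← mul_assoc, Nat.add_mul_div_right _ _ hq, lowerHeight]
  rw [theta_iterate_eq_map, lowerChristoffel, lowerChristoffel, List.map_map]
  refine List.map_congr_left fun i _ => ?_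
  have := monotone_lowerHeight p q (Nat.le_add_right i 1)
  simp only [Function.comp, increments, hheight, add_one_mul]
  omega

/-- The fractions `p₁ / q₁ < p₂ / q₂` in `[0, 1]` are neighbours, and their Christoffel words are
consecutive Farey words of level `n`. -/
structure FareyPair (n p₁ q₁ p₂ q₂ : ℕ) : Prop where
  left_pos : 0 < q₁
  right_pos : 0 < q₂
  right_le : p₂ ≤ q₂
  det : p₂ * q₁ = p₁ * q₂ + 1
  le_add : n + 2 ≤ q₁ + q₂
  infix_fareyLevel : [lowerChristoffel p₁ q₁, lowerChristoffel p₂ q₂] <:+: fareyLevel n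

namespace FareyPair

variable {n p₁ q₁ p₂ q₂ : ℕ}

lemma zero : FareyPair 0 0 1 1 1 where
  left_pos := one_pos
  right_pos := one_pos
  right_le := le_rfl
  det := rfl
  le_add := le_rfl
  infix_fareyLevel := List.infix_rfl

lemma infix_fareyLevel_succ (h : FareyPair n p₁ q₁ p₂ q₂) :
    [lowerChristoffel p₁ q₁, lowerChristoffel (p₁ + p₂) (q₁ + q₂), lowerChristoffel p₂ q₂] <:+:
      fareyLevel (n + 1) := by
  rw [← lowerChristoffel_append h.left_pos h.right_pos h.det]
  exact infix_fareyInsert h.infix_fareyLevel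

lemma left_le (h : FareyPair n p₁ q₁ p₂ q₂) : p₁ ≤ q₁ := by
  have := Nat.mul_le_mul_right q₁ h.right_le
  exact Nat.le_of_mul_le_mul_right (by linarith [h.det]) h.right_pos

lemma mediant_left (h : FareyPair n p₁ q₁ p₂ q₂) :
    FareyPair (n + 1) p₁ q₁ (p₁ + p₂) (q₁ + q₂) where
  left_pos := h.left_pos
  right_pos := Nat.add_pos_left h.left_pos q₂
  right_le := Nat.add_le_add h.left_le h.right_le
  det := mediant_left_det h.det
  le_add := by linarith [h.le_add, h.left_pos]
  infix_fareyLevel := .trans (List.prefix_append _ [_]).isInfix h.infix_fareyLevel_succ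

lemma mediant_right (h : FareyPair n p₁ q₁ p₂ q₂) :
    FareyPair (n + 1) (p₁ + p₂) (q₁ + q₂) p₂ q₂ where
  left_pos := Nat.add_pos_left h.left_pos q₂
  right_pos := h.right_pos
  right_le := h.right_le
  det := mediant_right_det h.det
  le_add := by linarith [h.le_add, h.right_pos]
  infix_fareyLevel := .trans (List.suffix_append [_] _).isInfix h.infix_fareyLevel_succ

lemma theta_mediant_mem_FareyExt (h : FareyPair n p₁ q₁ p₂ q₂) (r : ℕ) :
    theta^[r] (lowerChristoffel (p₁ + p₂) (q₁ + q₂)) ∈ FareyExt := by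
  have hlen : (lowerChristoffel (p₁ + p₂) (q₁ + q₂)).length ≠ 1 := by
    have := h.le_add
    simp only [lowerChristoffel, List.length_map, List.length_range]
    omega
  have hmem := h.infix_fareyLevel_succ.subset (List.mem_cons_of_mem _ List.mem_cons_self)
  exact ⟨_, Or.inl ⟨⟨n + 1, hmem⟩, fun heq => hlen (by rw [heq]; rfl),
    fun heq => hlen (by rw [heq]; rfl)⟩, r, rfl⟩

lemma increments_upperHeightRight_eq (h : FareyPair n p₁ q₁ p₂ q₂) (r : ℕ) {i : ℕ} (hi : i ≤ n) :
    increments (upperHeightRight (p₁ + r * q₁) q₁) i =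
      increments (upperHeight (p₂ + r * q₂) q₂) i := by
  have hdet : (p₂ + r * q₂) * q₁ = (p₁ + r * q₁) * q₂ + 1 := by linear_combination h.det
  have heq : ∀ j ≤ n + 1, upperHeight (p₂ + r * q₂) q₂ j = upperHeightRight (p₁ + r * q₁) q₁ j :=
    fun j hj => upperHeight_eq_upperHeightRight h.left_pos h.right_pos hdet
      (by linarith [h.le_add])
  rw [increments, increments, heq i (by omega), heq (i + 1) (by omega)]

end FareyPair

/-! ### Farey intervals -/

section FareyInterval

variable {β : ℝ} {p q : ℕ}

lemma exists_one_lt_valSeq_eq_one {x : ℕ → ℕ} (hx : BddAbove (range x)) (hx0 : ∀ i, x i ≠ 0) :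
    ∃ β, 1 < β ∧ valSeq β x = 1 := by
  obtain ⟨β, hβ, hval⟩ := exists_valSeq_eq_one one_lt_two hx (one_le_valSeq_two hx hx0)
  exact ⟨β, one_lt_two.trans_le hβ, hval⟩

lemma increments_upperHeight_ne_zero (hq : 0 < q) (hqp : q ≤ p) (i : ℕ) :
    increments (upperHeight p q) i ≠ 0 :=
  Nat.one_le_iff_ne_zero.1 (le_increments_upperHeight hq (by rwa [one_mul]) i)

lemma increments_upperHeightRight_ne_zero (hq : 0 < q) (hqp : q ≤ p) (i : ℕ) :
    increments (upperHeightRight p q) i ≠ 0 := by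
  have : 1 ≤ increments (lowerHeight p q) i := le_increments_lowerHeight hq (by rwa [one_mul]) i
  rw [increments_upperHeightRight]
  omega

lemma valSeq_betaL_lowerChristoffel (hq : 0 < q) (hpq : p.Coprime q) (hqp : q ≤ p) :
    valSeq (betaL (lowerChristoffel p q)) (increments (upperHeight p q)) = 1 := by
  rw [betaL, maxCyc_lowerChristoffel hq hpq, perSeq_upperChristoffel hq]
  exact (Classical.epsilon_spec (exists_one_lt_valSeq_eq_one
    (bddAbove_range_of_periodic hq (periodic_increments_upperHeight hq p))
    (increments_upperHeight_ne_zero hq hqp))).2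

lemma betaR_lowerChristoffel_spec (hq : 0 < q) (hpq : p.Coprime q) (hqp : q ≤ p) :
    1 < betaR (lowerChristoffel p q) ∧
      valSeq (betaR (lowerChristoffel p q)) (increments (upperHeightRight p q)) = 1 := by
  rw [betaR, maxCyc_lowerChristoffel hq hpq, wordSeq_wplus_upperChristoffel hq hpq]
  exact Classical.epsilon_spec (exists_one_lt_valSeq_eq_one
    (bddAbove_range_increments_upperHeightRight hq p) (increments_upperHeightRight_ne_zero hq hqp))

lemma quasiGreedy_one_le_of_lt_betaL (hβ : 1 < β) (hq : 0 < q) (hpq : p.Coprime q) (hqp : q ≤ p)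
    (hlt : β < betaL (lowerChristoffel p q)) :
    toLex (quasiGreedy β 1) ≤ toLex (increments (upperHeight p q)) := by
  have hone : (1 : ℝ) ∈ Ioc (0 : ℝ) 1 := right_mem_Ioc.2 one_pos
  have hbdd := bddAbove_range_of_periodic hq (periodic_increments_upperHeight hq p)
  have hval : 1 ≤ valSeq β (increments (upperHeight p q)) :=
    (valSeq_betaL_lowerChristoffel hq hpq hqp).ge.trans (valSeq_antitone_base hβ hlt.le hbdd)
  exact toLex_le_of_one_le_valSeq hβ hbdd (toLex_shiftn_increments_upperHeight_le hq p) hval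
    (bddAbove_range_quasiGreedy (zero_lt_one.trans hβ) hone)
    (frequently_quasiGreedy_ne_zero hβ hone) (valSeq_quasiGreedy hβ hone)

lemma le_quasiGreedy_one_of_betaR_lt (hq : 0 < q) (hpq : p.Coprime q) (hqp : q ≤ p)
    (hlt : betaR (lowerChristoffel p q) < β) :
    toLex (increments (upperHeightRight p q)) ≤ toLex (quasiGreedy β 1) := by
  have hone : (1 : ℝ) ∈ Ioc (0 : ℝ) 1 := right_mem_Ioc.2 one_pos
  obtain ⟨hγ, hγval⟩ := betaR_lowerChristoffel_spec hq hpq hqp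
  have hβ : 1 < β := hγ.trans hlt
  have hbdd := bddAbove_range_quasiGreedy (zero_lt_one.trans hβ) hone
  have hval : 1 ≤ valSeq (betaR (lowerChristoffel p q)) (quasiGreedy β 1) :=
    (valSeq_quasiGreedy hβ hone).ge.trans (valSeq_antitone_base hγ hlt.le hbdd)
  exact toLex_le_of_one_le_valSeq hγ hbdd (toLex_shiftn_quasiGreedy_one_le hβ) hval
    (bddAbove_range_increments_upperHeightRight hq p)
    (.of_forall (increments_upperHeightRight_ne_zero hq hqp)) hγval

lemma quasiGreedy_one_le_or_le (hβ : β ∈ Eexc) (hq : 0 < q) (hpq : p.Coprime q) (hqp : q ≤ p)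
    (hs : lowerChristoffel p q ∈ FareyExt) :
    toLex (quasiGreedy β 1) ≤ toLex (increments (upperHeight p q)) ∨
      toLex (increments (upperHeightRight p q)) ≤ toLex (quasiGreedy β 1) := by
  have hnotMem : β ∉ Jint (lowerChristoffel p q) := fun h => hβ.2 (mem_iUnion₂_of_mem hs h)
  rw [Jint, mem_Icc, not_and_or, not_le, not_le] at hnotMem
  exact hnotMem.imp (quasiGreedy_one_le_of_lt_betaL hβ.1 hq hpq hqp)
    (le_quasiGreedy_one_of_betaR_lt hq hpq hqp)

end FareyInterval

/-! ### Descent in the Farey tree -/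

section Descent

variable {β : ℝ} {r : ℕ}

lemma natCeil_eq_of_mem_Ioc (hβ : β ∈ Ioc (r : ℝ) (r + 1)) : ⌈β⌉₊ = r + 1 :=
  (Nat.ceil_eq_iff r.succ_ne_zero).2 ⟨by simpa using hβ.1, by simpa using hβ.2⟩

lemma quasiGreedy_one_le_of_mem_Ioc (hβ : β ∈ Ioc (r : ℝ) (r + 1)) :
    toLex (quasiGreedy β 1) ≤ toLex (increments (upperHeight r 1)) := by
  have hβ0 : 0 < β := r.cast_nonneg.trans_lt hβ.1
  refine Pi.toLex_monotone fun i => ?_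
  calc quasiGreedy β 1 i ≤ ⌈β⌉₊ - 1 := quasiGreedy_le hβ0 (right_mem_Ioc.2 one_pos) i
    _ = r := by rw [natCeil_eq_of_mem_Ioc hβ, Nat.add_sub_cancel]
    _ ≤ increments (upperHeight r 1) i := le_increments_upperHeight one_pos (mul_one r).le i

lemma le_quasiGreedy_one_of_mem_Ioc (hβE : β ∈ Eexc) (hr : 0 < r)
    (hβ : β ∈ Ioc ((r + 1 : ℕ) : ℝ) ((r + 1 : ℕ) + 1)) :
    toLex (increments (upperHeightRight r 1)) ≤ toLex (quasiGreedy β 1) := by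
  have hmem : lowerChristoffel r 1 ∈ FareyExt := by
    refine ⟨[1], Or.inr rfl, r - 1, ?_⟩
    simp [theta_iterate_eq_map, lowerChristoffel, increments, lowerHeight, Nat.add_sub_cancel' hr]
  refine (quasiGreedy_one_le_or_le hβE one_pos r.coprime_one_right hr hmem).resolve_left ?_
  rw [not_le]
  refine ⟨0, by simp, ?_⟩
  have hdigit : quasiGreedy β 1 0 = r + 1 := by
    simp [quasiGreedy, natCeil_eq_of_mem_Ioc hβ]
  exact (increments_upperHeight_le one_pos (mul_one r).ge 0).trans_lt (by simp [hdigit])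

lemma exists_fareyPair (hβ : β ∈ Eexc) (hr : 0 < r)
    (hlower : toLex (increments (upperHeightRight r 1)) ≤ toLex (quasiGreedy β 1))
    (hupper : toLex (quasiGreedy β 1) ≤ toLex (increments (upperHeight (r + 1) 1))) (n : ℕ) :
    ∃ p₁ q₁ p₂ q₂, FareyPair n p₁ q₁ p₂ q₂ ∧
      toLex (increments (upperHeightRight (p₁ + r * q₁) q₁)) ≤ toLex (quasiGreedy β 1) ∧
      toLex (quasiGreedy β 1) ≤ toLex (increments (upperHeight (p₂ + r * q₂) q₂)) := by
  induction n with
  | zero => exact ⟨0, 1, 1, 1, .zero, by simpa using hlower, by simpa [add_comm] using hupper⟩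
  | succ n ih =>
    obtain ⟨p₁, q₁, p₂, q₂, hpair, hl, hu⟩ := ih
    have hq : 0 < q₁ + q₂ := Nat.add_pos_left hpair.left_pos q₂
    have hmem := hpair.theta_mediant_mem_FareyExt r
    rw [theta_iterate_lowerChristoffel hq] at hmem
    rcases quasiGreedy_one_le_or_le hβ hq
      ((Nat.coprime_add_mul_right_left _ _ _).2 (coprime_mediant hpair.det))
      (Nat.le_add_left_of_le (Nat.le_mul_of_pos_left _ hr)) hmem with h | h
    · exact ⟨p₁, q₁, _, _, hpair.mediant_left, hl, h⟩
    · exact ⟨_, _, p₂, q₂, hpair.mediant_right, h, hu⟩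

lemma exists_upperHeight_prefix (hβE : β ∈ Eexc) (hr : 0 < r)
    (hβ : β ∈ Ioc ((r + 1 : ℕ) : ℝ) ((r + 1 : ℕ) + 1)) (n : ℕ) :
    ∃ p q, 0 < q ∧ r * q ≤ p ∧ p ≤ (r + 1) * q ∧
      ∀ i ≤ n, quasiGreedy β 1 i = increments (upperHeight p q) i := by
  obtain ⟨p₁, q₁, p₂, q₂, hpair, hl, hu⟩ := exists_fareyPair hβE hr
    (le_quasiGreedy_one_of_mem_Ioc hβE hr hβ) (quasiGreedy_one_le_of_mem_Ioc hβ) n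
  refine ⟨p₂ + r * q₂, q₂, hpair.right_pos, Nat.le_add_left _ _,
    by linarith [hpair.right_le], fun i hi => ?_⟩
  exact eq_of_toLex_le_of_toLex_le hl hu (n := n + 1)
    (fun j hj => hpair.increments_upperHeightRight_eq r (Nat.le_of_lt_succ hj))
    (Nat.lt_succ_of_le hi)

end Descent

/-- Let `k ≥ 2` and `β ∈ E ∩ (k, k+1]`.  Then the quasi-greedy
expansion `α(β)` of `1` in base `β` takes digits in `{k-1, k}` only. -/
theorem quasi_greedy_two_digits (k : ℕ) (hk : 2 ≤ k) (β : ℝ)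
    (hβE : β ∈ Eexc) (hβ : β ∈ Set.Ioc (k : ℝ) ((k : ℝ) + 1))
    (a : ℕ → ℕ) (ha : IsQuasiGreedyOne β a) :
    ∀ i, a i = k - 1 ∨ a i = k := by
  obtain ⟨r, rfl⟩ : ∃ r, k = r + 1 := ⟨k - 1, by omega⟩
  obtain rfl := ha.eq_quasiGreedy hβE.1
  intro i
  obtain ⟨p, q, hq, hle, hge, hprefix⟩ := exists_upperHeight_prefix hβE (by omega) hβ i
  have hlower := le_increments_upperHeight hq hle i
  have hupper := increments_upperHeight_le hq hge i
  rw [hprefix i le_rfl]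
  omega
end

section
/- Let S ∈ Λ_e and let M ∈ ℕ be such that J^S ⊆ [M, M+1). Then the set Γ(S) := {z ∈ {0,1,…,M}^ℕ : S^∞ ≼ σ^n(z) ≼ L(S)^∞ for all n ≥ 0} is countable, where σ is the left shift and ≼ denotes the lexicographic order. -/
open Set Filter MeasureTheory Topology

/-!
The period of a Farey word `s` is a Christoffel word: swapping its first and last letters amounts to
rotating it by some `k`. Hence the shifts of `s^∞` by `k, 2k, 3k, …` decrease lexicographically from
`L(s)^∞` to `s^∞`, and two neighbours first differ by `1` in a letter after which the smaller one
continues with `L(s)^∞` and the larger one with `s^∞`. No element of `Γ(s)` fits strictly between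
them, so `Γ(s)` consists of shifts of `s^∞`.

If `s` is replaced by `s • r`, a sequence in `Γ(s • r)` that is not in `Γ(s)` has a shift outside
`[s^∞, L(s)^∞]`. From there on every letter at the end of a block leaves exactly two choices, which
makes the tail the image under `Φ_s` of a binary sequence. As `Φ_s` is strictly increasing, the
shifts of that sequence after its first change of digits lie in `Γ(r)`, and countability passes from
`Γ(s)` and `Γ(r)` to `Γ(s • r)`. The reflection `x ↦ c - x` exchanges smallest and largest shifts,
so that only one of each pair of symmetric inequalities needs a proof.
-/

local notation:50 x:51 " ≺ " y:51 => toLex x < toLex y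
local notation:50 x:51 " ≼ " y:51 => toLex x ≤ toLex y

section Shift

variable {α : Type*}

/-- The `n`-fold left shift `σⁿ` on sequences with values in an arbitrary type. -/
def shift (n : ℕ) (z : ℕ → α) : ℕ → α := fun i => z (i + n)

theorem shift_zero (z : ℕ → α) : shift 0 z = z := rfl

theorem shift_shift (m n : ℕ) (z : ℕ → α) : shift m (shift n z) = shift (m + n) z :=
  funext fun i => congrArg z (add_assoc i m n)

theorem shift_eq_self_of_dvd {X : ℕ → α} {m i : ℕ} (h : Function.Periodic X m)
    (hi : m ∣ i) : shift i X = X := by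
  obtain ⟨q, rfl⟩ := hi
  funext j
  simpa [shift, mul_comm] using h.nat_mul q j

theorem eq_of_shift_eq {x y : ℕ → α} {n : ℕ} (hpre : ∀ i < n, x i = y i)
    (h : shift n x = shift n y) : x = y := by
  funext i
  rcases lt_or_ge i n with hi | hi
  · exact hpre i hi
  · simpa [shift, Nat.sub_add_cancel hi] using congrFun h (i - n)

theorem countable_preimage_shift [Countable α] {C : Set (ℕ → α)} (hC : C.Countable) (n : ℕ) :
    (shift n ⁻¹' C).Countable := by
  have hinj : Function.Injective fun z : ℕ → α => (fun i : Fin n => z i, shift n z) := by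
    intro z z' h
    rw [Prod.mk.injEq] at h
    exact eq_of_shift_eq (fun i hi => congrFun h.1 ⟨i, hi⟩) h.2
  exact ((countable_univ.prod hC).preimage hinj).mono fun _ hz => mk_mem_prod (mem_univ _) hz

end Shift

section Lexicographic

variable {α : Type*} [LinearOrder α] {x y U V : ℕ → α} {n : ℕ}

theorem toLex_lt_iff_exists : x ≺ y ↔ ∃ n, (∀ i < n, x i = y i) ∧ x n < y n := Iff.rfl

theorem shift_lt_shift_iff (hpre : ∀ i < n, x i = y i) : shift n x ≺ shift n y ↔ x ≺ y := by
  simp only [toLex_lt_iff_exists]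
  constructor
  · rintro ⟨k, hk, hlt⟩
    refine ⟨k + n, fun i hi => ?_, hlt⟩
    rcases lt_or_ge i n with hin | hin
    · exact hpre i hin
    · simpa [shift, Nat.sub_add_cancel hin] using hk (i - n) (by omega)
  · rintro ⟨k, hk, hlt⟩
    have hnk : n ≤ k := not_lt.1 fun hkn => hlt.ne (hpre k hkn)
    exact ⟨k - n, fun i hi => hk _ (by omega), by simpa [shift, Nat.sub_add_cancel hnk] using hlt⟩

theorem shift_le_shift_iff (hpre : ∀ i < n, x i = y i) : shift n x ≼ shift n y ↔ x ≼ y :=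
  le_iff_le_iff_lt_iff_lt.2 (shift_lt_shift_iff fun i hi => (hpre i hi).symm)

theorem lt_of_first_gt {A T W : ℕ → α} (hT : ∀ j < n, T j = A j) (hTn : A n < T n)
    (hU : U ≼ A) (hW : ∀ j ≤ n, W j = U j) : W ≺ T := by
  have hUT : U ≺ T := hU.trans_lt ⟨n, fun j hj => (hT j hj).symm, hTn⟩
  obtain ⟨k, hk, hlt⟩ := hUT
  have hkn : k ≤ n := by
    by_contra! hnk
    have hle : U n ≤ A n :=
      Pi.apply_le_of_toLex hU fun j hj => (hk j (hj.trans hnk)).trans (hT j hj)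
    exact (hle.trans_lt hTn).ne (hk n hnk)
  exact ⟨k, fun j hj => (hW j (hj.le.trans hkn)).trans (hk j hj), (hW k hkn).trans_lt hlt⟩

theorem eq_left_or_eq_right_of_between {z : ℕ → α} (hUV : ∀ j < n, U j = V j) (hn : U n ⋖ V n)
    (hU : U ≼ z) (hV : z ≼ V) :
    ((∀ j < n + 1, z j = U j) ∧ shift (n + 1) U ≼ shift (n + 1) z) ∨
      ((∀ j < n + 1, z j = V j) ∧ shift (n + 1) z ≼ shift (n + 1) V) := by
  have hz : ∀ j < n, z j = U j := by
    intro j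
    induction j using Nat.strong_induction_on with
    | _ j ih =>
      intro hj
      have hpre : ∀ i < j, z i = U i := fun i hi => ih i hi (hi.trans hj)
      refine le_antisymm ?_ (Pi.apply_le_of_toLex hU fun i hi => (hpre i hi).symm)
      rw [hUV j hj]
      exact Pi.apply_le_of_toLex hV fun i hi => (hpre i hi).trans (hUV i (hi.trans hj))
  have hzV : ∀ j < n, z j = V j := fun j hj => (hz j hj).trans (hUV j hj)
  have hle : U n ≤ z n := Pi.apply_le_of_toLex hU fun i hi => (hz i hi).symm
  have hge : z n ≤ V n := Pi.apply_le_of_toLex hV hzV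
  rcases hn.eq_or_eq hle hge with h | h
  · have hpre := Nat.forall_lt_succ_right.2 ⟨hz, h⟩
    exact .inl ⟨hpre, (shift_le_shift_iff fun j hj => (hpre j hj).symm).2 hU⟩
  · have hpre := Nat.forall_lt_succ_right.2 ⟨hzV, h⟩
    exact .inr ⟨hpre, (shift_le_shift_iff hpre).2 hV⟩

/-- The set `Γ` of sequences all of whose shifts lie lexicographically between `X` and `A`. -/
def shiftsBetween (X A : ℕ → α) : Set (ℕ → α) := {z | ∀ n, X ≼ shift n z ∧ shift n z ≼ A}

theorem shift_mem_shiftsBetween {X A z : ℕ → α} (hz : z ∈ shiftsBetween X A) (k : ℕ) :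
    shift k z ∈ shiftsBetween X A := fun n => by
  rw [shift_shift]
  exact hz _

end Lexicographic

section Reflect

variable {α : Type*} [AddCommGroup α] (c : α)

/-- The digitwise reflection `x ↦ c - x`, which reverses the lexicographic order. -/
def reflect (x : ℕ → α) : ℕ → α := fun i => c - x i

theorem shift_reflect (n : ℕ) (x : ℕ → α) : shift n (reflect c x) = reflect c (shift n x) := rfl

variable [LinearOrder α] [IsOrderedAddMonoid α] {x y : ℕ → α}

theorem reflect_lt_reflect_iff : reflect c x ≺ reflect c y ↔ y ≺ x :=
  sub_lt_sub_iff_left (toLex fun _ => c)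

theorem reflect_le_reflect_iff : reflect c x ≼ reflect c y ↔ y ≼ x :=
  sub_le_sub_iff_left (toLex fun _ => c)

end Reflect

/-- `X` and `A` are the strictly smallest and the strictly largest shift of a sequence with minimal
period `m`. -/
structure ExtremalPair {α : Type*} [LinearOrder α] (m : ℕ) (X A : ℕ → α) : Prop where
  pos : 0 < m
  periodic : Function.Periodic X m
  exists_shift : ∃ k, A = shift k X
  lt_shift : ∀ i, ¬ m ∣ i → X ≺ shift i X
  shift_lt : ∀ i, ¬ m ∣ i → shift i A ≺ A

namespace ExtremalPair

variable {α : Type*}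

section LinearOrder

variable [LinearOrder α] {m : ℕ} {X A : ℕ → α}

theorem periodic_right (h : ExtremalPair m X A) : Function.Periodic A m := by
  obtain ⟨k, rfl⟩ := h.exists_shift
  intro i
  simpa only [shift, add_right_comm] using h.periodic (i + k)

theorem exists_shift_right (h : ExtremalPair m X A) : ∃ k, X = shift k A := by
  obtain ⟨k, rfl⟩ := h.exists_shift
  refine ⟨m * k - k, ?_⟩
  rw [shift_shift, Nat.sub_add_cancel (Nat.le_mul_of_pos_left k h.pos)]
  exact (shift_eq_self_of_dvd h.periodic (Dvd.intro k rfl)).symm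

theorem left_le_shift_left (h : ExtremalPair m X A) (i : ℕ) : X ≼ shift i X := by
  by_cases hi : m ∣ i
  · rw [shift_eq_self_of_dvd h.periodic hi]
  · exact (h.lt_shift i hi).le

theorem shift_right_le_right (h : ExtremalPair m X A) (i : ℕ) : shift i A ≼ A := by
  by_cases hi : m ∣ i
  · rw [shift_eq_self_of_dvd h.periodic_right hi]
  · exact (h.shift_lt i hi).le

theorem left_le_shift_right (h : ExtremalPair m X A) (i : ℕ) : X ≼ shift i A := by
  obtain ⟨k, hk⟩ := h.exists_shift
  rw [hk, shift_shift]
  exact h.left_le_shift_left _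

theorem shift_left_le_right (h : ExtremalPair m X A) (i : ℕ) : shift i X ≼ A := by
  obtain ⟨k, hk⟩ := h.exists_shift_right
  rw [hk, shift_shift]
  exact h.shift_right_le_right _

theorem head_le (h : ExtremalPair m X A) (i : ℕ) : X 0 ≤ X i := by
  simpa [shift] using Pi.apply_le_of_toLex (h.left_le_shift_left i) (i := 0) (by simp)

theorem head_lt_last (h : ExtremalPair m X A) (hm : 1 < m) : X 0 < X (m - 1) := by
  refine (h.head_le _).lt_of_ne fun heq => ?_
  have hlt := h.lt_shift (m - 1) (Nat.not_dvd_of_pos_of_lt (by omega) (by omega))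
  rw [← shift_lt_shift_iff (n := 1) (by simpa [shift] using heq), shift_shift,
    Nat.add_sub_cancel' hm.le, shift_eq_self_of_dvd h.periodic dvd_rfl] at hlt
  exact hlt.not_ge (h.left_le_shift_left 1)

theorem exists_suffix_lt (h : ExtremalPair m X A) {i : ℕ} (hi₀ : 0 < i) (hi : i < m) :
    ∃ j < m - i, (∀ l < j, A (l + i) = A l) ∧ A (j + i) < A j := by
  obtain ⟨n, hn, hlt⟩ := toLex_lt_iff_exists.1 (h.shift_lt i (Nat.not_dvd_of_pos_of_lt hi₀ hi))
  refine ⟨n, not_le.1 fun hmn => ?_, hn, hlt⟩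
  have hlt' : shift (m - i) (shift i A) ≺ shift (m - i) A :=
    (shift_lt_shift_iff fun l hl => hn l (hl.trans_le hmn)).2 ⟨n, hn, hlt⟩
  rw [shift_shift, Nat.sub_add_cancel hi.le, shift_eq_self_of_dvd h.periodic_right dvd_rfl] at hlt'
  exact hlt'.not_ge (h.shift_right_le_right _)

end LinearOrder

theorem reflect [AddCommGroup α] [LinearOrder α] [IsOrderedAddMonoid α] {m : ℕ} {X A : ℕ → α}
    (h : ExtremalPair m X A) (c : α) : ExtremalPair m (reflect c A) (reflect c X) where
  pos := h.pos
  periodic i := congrArg (c - ·) (h.periodic_right i)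
  exists_shift := by
    obtain ⟨k, hk⟩ := h.exists_shift_right
    exact ⟨k, by rw [shift_reflect, ← hk]⟩
  lt_shift i hi := (reflect_lt_reflect_iff c).2 (h.shift_lt i hi)
  shift_lt i hi := (reflect_lt_reflect_iff c).2 (h.lt_shift i hi)

end ExtremalPair

/-! ### Christoffel sequences -/

/-- The sequence repeating a lower Christoffel word of length `N`: shifting it by `k` swaps the
first and the last letter of the period block (`0u1` becomes `1u0`) and changes nothing else. -/
structure IsChristoffel (N k : ℕ) (R : ℕ → ℤ) : Prop where
  pos : 0 < N
  periodic : Function.Periodic R N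
  swap : ∀ i, R (i + k) = R i + (if N ∣ i then 1 else 0) - if N ∣ i + 1 then 1 else 0

namespace IsChristoffel

variable {N k : ℕ} {R : ℕ → ℤ}

theorem coprime (h : IsChristoffel N k R) : Nat.Coprime N k := by
  obtain ⟨l, hl⟩ : ∃ l, N ∣ l * k + 1 := by
    by_contra! hnot
    have hstep (l : ℕ) : R ((l + 1) * k) = R (l * k) + if N ∣ l * k then 1 else 0 := by
      rw [Nat.succ_mul, h.swap, if_neg (hnot l), sub_zero]
    have hmono : Monotone fun l => R (l * k) := monotone_nat_of_le_succ fun l => by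
      rw [hstep]
      split_ifs <;> simp
    have hjump : R (1 * k) = R 0 + 1 := by simpa using hstep 0
    have hperiod : R (N * k) = R 0 := congrFun (shift_eq_self_of_dvd h.periodic ⟨k, rfl⟩) 0 ▸ by
      simp [shift]
    have hle := hmono (show 1 ≤ N from h.pos)
    simp only [hjump, hperiod] at hle
    omega
  rw [← Nat.isCoprime_iff_coprime]
  obtain ⟨c, hc⟩ := hl
  have hc' : (l * k + 1 : ℤ) = N * c := mod_cast hc
  exact ⟨c, -l, by linear_combination -hc'⟩

theorem exists_first_swap (h : IsChristoffel N k R) {a : ℕ} (ha : ¬ N ∣ a) :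
    ∃ n, N ∣ n + 1 + a ∧ (∀ i < n, shift (a + k) R i = shift a R i) ∧
      shift (a + k) R n ⋖ shift a R n := by
  have hN := h.pos
  have hmod : 0 < a % N := Nat.pos_of_ne_zero fun h0 => ha (Nat.dvd_of_mod_eq_zero h0)
  have hlt := Nat.mod_lt a hN
  have ha_eq := Nat.mod_add_div a N
  have hdvd (i : ℕ) : N ∣ i + a ↔ N ∣ i + a % N := by
    rw [Nat.dvd_iff_mod_eq_zero, Nat.dvd_iff_mod_eq_zero, Nat.add_mod_mod]
  have hnot {i : ℕ} (hi : i + a % N < N) : ¬ N ∣ i + a := by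
    rw [hdvd]
    exact Nat.not_dvd_of_pos_of_lt (Nat.add_pos_right i hmod) hi
  have hlast : N ∣ N - 1 - a % N + 1 + a := by
    rw [hdvd]
    exact ⟨1, by omega⟩
  refine ⟨N - 1 - a % N, hlast, fun i hi => ?_, Order.covBy_iff_add_one_eq.2 ?_⟩
  · have hnext : ¬ N ∣ i + a + 1 := by
      rw [add_right_comm]
      exact hnot (by omega)
    simp only [shift, ← add_assoc, h.swap, if_neg hnext, if_neg (hnot (i := i) (by omega)),
      add_zero, sub_zero]
  · rw [add_right_comm] at hlast
    simp only [shift, ← add_assoc, h.swap, if_pos hlast,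
      if_neg (hnot (i := N - 1 - a % N) (by omega)), add_zero, sub_add_cancel]

theorem strictAntiOn_shift_mul (h : IsChristoffel N k R) :
    StrictAntiOn (fun j => toLex (shift (j * k) R)) (Icc 1 N) := by
  refine strictAntiOn_of_add_one_lt ordConnected_Icc fun j _ hj hj' => ?_
  have hndvd : ¬ N ∣ j * k := fun hd =>
    Nat.not_dvd_of_pos_of_lt hj.1 hj'.2 (h.coprime.dvd_of_dvd_mul_right hd)
  obtain ⟨n, -, hn, hlt⟩ := h.exists_first_swap hndvd
  rw [← Nat.succ_mul] at hn hlt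
  exact ⟨n, hn, hlt.lt⟩

theorem exists_shift_eq_shift_mul (h : IsChristoffel N k R) {i : ℕ} (hi : ¬ N ∣ i) :
    ∃ l, 0 < l ∧ l < N ∧ shift i R = shift (l * k) R := by
  obtain ⟨l, hl, hmod⟩ :=
    Nat.exists_mul_mod_eq_of_coprime (n := k) (k := N) i h.coprime.symm h.pos.ne'
  rw [mul_comm] at hmod
  refine ⟨l, Nat.pos_of_ne_zero ?_, hl, funext fun j => ?_⟩
  · rintro rfl
    exact hi (Nat.dvd_of_mod_eq_zero (by simpa using hmod.symm))
  · have heq := Nat.ModEq.add_left j hmod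
    simp only [shift]
    rw [← h.periodic.map_mod_nat, ← heq, h.periodic.map_mod_nat]

theorem extremalPair (h : IsChristoffel N k R) : ExtremalPair N R (shift k R) where
  pos := h.pos
  periodic := h.periodic
  exists_shift := ⟨k, rfl⟩
  lt_shift i hi := by
    obtain ⟨l, hl₀, hl, heq⟩ := h.exists_shift_eq_shift_mul hi
    have hlt := h.strictAntiOn_shift_mul ⟨hl₀, hl.le⟩ ⟨h.pos, le_rfl⟩ hl
    simp only [shift_eq_self_of_dvd h.periodic (Dvd.intro k rfl)] at hlt
    rwa [heq]
  shift_lt i hi := by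
    obtain ⟨l, hl₀, hl, heq⟩ := h.exists_shift_eq_shift_mul hi
    have hlt := h.strictAntiOn_shift_mul (a := 1) (b := l + 1) ⟨le_rfl, h.pos⟩ ⟨by omega, hl⟩
      (by omega)
    simp only [one_mul] at hlt
    rwa [shift_shift, add_comm, ← shift_shift, heq, shift_shift, add_comm, ← Nat.succ_mul]

theorem eq_or_eq_of_between_consecutive (h : IsChristoffel N k R) {z : ℕ → ℤ}
    (hz : z ∈ shiftsBetween R (shift k R)) {a : ℕ} (ha : ¬ N ∣ a)
    (hlo : shift (a + k) R ≼ z) (hhi : z ≼ shift a R) :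
    z = shift (a + k) R ∨ z = shift a R := by
  obtain ⟨n, hdvd, hn, hcov⟩ := h.exists_first_swap ha
  have hlow : shift (n + 1) (shift (a + k) R) = shift k R := by
    rw [shift_shift, ← add_assoc, add_comm, ← shift_shift, shift_eq_self_of_dvd h.periodic hdvd]
  have hupp : shift (n + 1) (shift a R) = R := by
    rw [shift_shift, shift_eq_self_of_dvd h.periodic hdvd]
  rcases eq_left_or_eq_right_of_between hn hcov hlo hhi with ⟨hpre, hle⟩ | ⟨hpre, hle⟩
  · rw [hlow] at hle
    exact .inl (eq_of_shift_eq hpre ((toLex.injective ((hz _).2.antisymm hle)).trans hlow.symm))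
  · rw [hupp] at hle
    exact .inr (eq_of_shift_eq hpre ((toLex.injective (hle.antisymm (hz _).1)).trans hupp.symm))

theorem shiftsBetween_subset (h : IsChristoffel N k R) :
    shiftsBetween R (shift k R) ⊆ Set.range fun j => shift (j * k) R := by
  intro z hz
  by_contra hne
  have hle : ∀ j, 1 ≤ j → j ≤ N → z ≼ shift (j * k) R := by
    intro j hj
    induction j, hj using Nat.le_induction with
    | base => simpa [shift_zero] using fun _ => (hz 0).2
    | succ j hj ih =>
      intro hjN
      have hndvd : ¬ N ∣ j * k := fun hd =>
        Nat.not_dvd_of_pos_of_lt hj hjN (h.coprime.dvd_of_dvd_mul_right hd)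
      by_contra! hlt
      rw [Nat.succ_mul] at hlt
      rcases h.eq_or_eq_of_between_consecutive hz hndvd hlt.le (ih (by omega)) with rfl | rfl
      · exact hlt.false
      · exact hne ⟨j, rfl⟩
  have hzR : z ≼ R := shift_eq_self_of_dvd h.periodic (Dvd.intro k rfl) ▸ hle N h.pos le_rfl
  exact hne ⟨0, by simpa [shift_zero] using toLex.injective ((hz 0).1.antisymm hzR)⟩

theorem countable_shiftsBetween (h : IsChristoffel N k R) :
    (shiftsBetween R (shift k R)).Countable :=
  (countable_range _).mono h.shiftsBetween_subset

end IsChristoffel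

/-! ### Binary sequences -/

section ConsSeq

variable {α : Type*} {p : α} {Y Y' : ℕ → α}

/-- The sequence `p Y₀ Y₁ …`. -/
def consSeq (p : α) (Y : ℕ → α) : ℕ → α
  | 0 => p
  | n + 1 => Y n

theorem shift_one_consSeq (p : α) (Y : ℕ → α) : shift 1 (consSeq p Y) = Y := rfl

theorem consSeq_shift (Y : ℕ → α) (q : ℕ) : consSeq (Y q) (shift (q + 1) Y) = shift q Y := by
  funext i
  cases i with
  | zero => simp [consSeq, shift]
  | succ i => simp only [consSeq, shift, add_assoc, add_comm 1 q]

theorem shift_consSeq (q : ℕ) : shift q (consSeq p Y) = consSeq (consSeq p Y q) (shift q Y) :=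
  (consSeq_shift (consSeq p Y) q).symm

theorem consSeq_const (p : α) : consSeq p (fun _ => p) = fun _ => p := by
  funext i
  cases i <;> rfl

theorem consSeq_last_of_periodic {N : ℕ} (hN : 0 < N) (hY : Function.Periodic Y N) :
    consSeq (Y (N - 1)) Y = shift (N - 1) Y := by
  rw [← consSeq_shift, Nat.sub_add_cancel hN, shift_eq_self_of_dvd hY dvd_rfl]

theorem consSeq_lt_consSeq_iff [LinearOrder α] : consSeq p Y ≺ consSeq p Y' ↔ Y ≺ Y' :=
  (shift_lt_shift_iff (n := 1) (by simp [consSeq])).symm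

theorem consSeq_le_consSeq_iff [LinearOrder α] : consSeq p Y ≼ consSeq p Y' ↔ Y ≼ Y' :=
  (shift_le_shift_iff (n := 1) (by simp [consSeq])).symm

theorem reflect_consSeq [AddCommGroup α] (c p : α) (Y : ℕ → α) :
    reflect c (consSeq p Y) = consSeq (c - p) (reflect c Y) := by
  funext i
  cases i <;> rfl

end ConsSeq

/-- Sequences of digits `0` and `1`. -/
def Binary (Y : ℕ → ℤ) : Prop := ∀ i, Y i = 0 ∨ Y i = 1

namespace Binary

variable {Y : ℕ → ℤ}

protected theorem shift (h : Binary Y) (n : ℕ) : Binary (shift n Y) := fun i => h (i + n)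

protected theorem reflect (h : Binary Y) : Binary (reflect 1 Y) := fun i => by
  have := h i
  simp only [_root_.reflect]
  omega

theorem consSeq {p : ℤ} (hp : p = 0 ∨ p = 1) (h : Binary Y) : Binary (consSeq p Y)
  | 0 => hp
  | n + 1 => h n

theorem const_zero_le (h : Binary Y) : (fun _ => 0) ≼ Y :=
  Pi.toLex_monotone fun i => by rcases h i with h | h <;> simp [h]

theorem le_const_one (h : Binary Y) : Y ≼ fun _ => 1 :=
  Pi.toLex_monotone fun i => by rcases h i with h | h <;> simp [h]

theorem le_shift_one (h : Binary Y) (h0 : Y 0 = 0) : Y ≼ shift 1 Y := by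
  by_contra! hlt
  obtain ⟨n, hn, hlt⟩ := toLex_lt_iff_exists.1 hlt
  have hzero : ∀ i ≤ n, Y i = 0 := fun i => by
    induction i with
    | zero => exact fun _ => h0
    | succ i ih => exact fun hi => (hn i hi).trans (ih (by omega))
  have := h (n + 1)
  simp only [hzero n le_rfl, shift] at hlt
  omega

end Binary

/-- An extremal pair of nonconstant sequences of digits `0` and `1`. -/
structure BinaryPair (N : ℕ) (R B : ℕ → ℤ) : Prop extends ExtremalPair N R B where
  one_lt : 1 < N
  binary : Binary R

namespace BinaryPair

variable {N : ℕ} {R B : ℕ → ℤ}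

theorem binary_right (h : BinaryPair N R B) : Binary B := by
  obtain ⟨k, rfl⟩ := h.exists_shift
  exact h.binary.shift k

protected theorem reflect (h : BinaryPair N R B) : BinaryPair N (reflect 1 B) (reflect 1 R) where
  toExtremalPair := h.toExtremalPair.reflect 1
  one_lt := h.one_lt
  binary := h.binary_right.reflect

theorem head_left (h : BinaryPair N R B) : R 0 = 0 := by
  have := h.head_lt_last h.one_lt
  have := h.binary 0
  have := h.binary (N - 1)
  omega

theorem last_left (h : BinaryPair N R B) : R (N - 1) = 1 := by
  have := h.head_lt_last h.one_lt
  have := h.binary 0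
  have := h.binary (N - 1)
  omega

theorem head_right (h : BinaryPair N R B) : B 0 = 1 := by
  have := h.reflect.head_left
  simp only [_root_.reflect] at this
  omega

theorem last_right (h : BinaryPair N R B) : B (N - 1) = 0 := by
  have := h.reflect.last_left
  simp only [_root_.reflect] at this
  omega

theorem consSeq_one_left (h : BinaryPair N R B) : consSeq 1 R = shift (N - 1) R := by
  rw [← h.last_left, consSeq_last_of_periodic h.pos h.periodic]

theorem consSeq_zero_right (h : BinaryPair N R B) : consSeq 0 B = shift (N - 1) B := by
  rw [← h.last_right, consSeq_last_of_periodic h.pos h.periodic_right]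

end BinaryPair

/-! ### The substitution -/

/-- The substitution `Φ` whose blocks of length `m` are read off from the smallest shift `X` and the
largest shift `A` of a periodic sequence. The letter `Y 0` is the digit preceding the substituted
sequence `Y 1, Y 2, …`: the `q`-th block is the one emitted between the digits `Y q` and
`Y (q + 1)`, so that `Φ(R)` is `substSeq m X A (consSeq 1 R)` if `R` starts with `0`. -/
def substSeq (m : ℕ) (X A Y : ℕ → ℤ) (i : ℕ) : ℤ :=
  (if Y (i / m) = 0 then A i else X i) + if m ∣ i + 1 then Y (i / m + 1) - Y (i / m) else 0

section SubstSeq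

variable {m : ℕ} {X A Y Y' : ℕ → ℤ}

theorem substSeq_congr {n : ℕ} (h : ∀ q ≤ n, Y q = Y' q) {i : ℕ} (hi : i < m * n) :
    substSeq m X A Y i = substSeq m X A Y' i := by
  have hq : i / m < n := Nat.div_lt_of_lt_mul hi
  rw [substSeq, substSeq, h _ hq.le, h _ hq]

theorem substSeq_of_lt {j : ℕ} (hj : j < m) :
    substSeq m X A Y j =
      (if Y 0 = 0 then A j else X j) + if j + 1 = m then Y 1 - Y 0 else 0 := by
  have hdvd : m ∣ j + 1 ↔ j + 1 = m :=
    ⟨fun h => le_antisymm hj (Nat.le_of_dvd j.succ_pos h), fun h => h ▸ dvd_rfl⟩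
  simp only [substSeq, Nat.div_eq_of_lt hj, hdvd, zero_add]

theorem substSeq_consSeq_of_lt {p : ℤ} {j : ℕ} (hj : j < m) :
    substSeq m X A (consSeq p Y) j =
      (if p = 0 then A j else X j) + if j + 1 = m then Y 0 - p else 0 :=
  substSeq_of_lt hj

theorem substSeq_const (p : ℤ) : substSeq m X A (fun _ => p) = if p = 0 then A else X := by
  funext i
  simp only [substSeq, sub_self, ite_self, add_zero]
  split_ifs <;> rfl

theorem substSeq_reflect (hY : Binary Y) :
    substSeq m (reflect 0 A) (reflect 0 X) (reflect 1 Y) = reflect 0 (substSeq m X A Y) := by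
  funext i
  rcases hY (i / m) with h | h <;> simp only [substSeq, reflect, h] <;> split_ifs <;> grind

namespace ExtremalPair

theorem shift_substSeq (h : ExtremalPair m X A) (q : ℕ) :
    shift (m * q) (substSeq m X A Y) = substSeq m X A (shift q Y) := by
  funext i
  have hdvd : m ∣ i + m * q + 1 ↔ m ∣ i + 1 := by
    rw [add_right_comm]
    exact Nat.dvd_add_left (Dvd.intro q rfl)
  have hX : X (i + m * q) = X i := congrFun (shift_eq_self_of_dvd h.periodic ⟨q, rfl⟩) i
  have hA : A (i + m * q) = A i := congrFun (shift_eq_self_of_dvd h.periodic_right ⟨q, rfl⟩) i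
  simp only [shift, substSeq, Nat.add_mul_div_left _ _ h.pos, hdvd, hX, hA,
    add_right_comm _ q 1]
  congr

theorem shift_substSeq_consSeq (h : ExtremalPair m X A) (p : ℤ) :
    shift m (substSeq m X A (consSeq p Y)) = substSeq m X A Y := by
  simpa [shift_one_consSeq] using h.shift_substSeq (Y := consSeq p Y) 1

theorem substSeq_of_le_of_lt (h : ExtremalPair m X A) {j : ℕ} (hmj : m ≤ j)
    (hj : j + 1 < 2 * m) : substSeq m X A Y j = if Y 1 = 0 then A j else X j := by
  obtain ⟨i, rfl⟩ := Nat.exists_eq_add_of_le' hmj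
  have heq := congrFun (h.shift_substSeq (Y := Y) 1) i
  rw [substSeq_of_lt (by omega), if_neg (by omega : ¬ i + 1 = m), add_zero, mul_one] at heq
  rw [h.periodic, h.periodic_right]
  simpa [shift] using heq

theorem substSeq_lt_substSeq (h : ExtremalPair m X A) (h0 : Y 0 = Y' 0)
    (hlt : Y ≺ Y') : substSeq m X A Y ≺ substSeq m X A Y' := by
  have hm := h.pos
  have hlast : m - 1 + 1 = m := Nat.sub_add_cancel hm
  obtain ⟨n, hn, hlt⟩ := toLex_lt_iff_exists.1 hlt
  obtain ⟨t, rfl⟩ := Nat.exists_eq_succ_of_ne_zero fun hn0 : n = 0 => hlt.ne (hn0 ▸ h0)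
  have hpre : ∀ q ≤ t, Y q = Y' q := fun q hq => hn q (Nat.lt_succ_of_le hq)
  rw [← shift_lt_shift_iff fun i hi => substSeq_congr hpre hi, h.shift_substSeq, h.shift_substSeq]
  refine toLex_lt_iff_exists.2 ⟨m - 1, fun j hj => ?_, ?_⟩
  · simp only [substSeq_of_lt (show j < m by omega), if_neg (show ¬ j + 1 = m by omega), shift,
      zero_add, hpre t le_rfl]
  · simpa only [substSeq_of_lt (Nat.sub_lt hm one_pos), if_pos hlast, shift,
      zero_add, hpre t le_rfl, add_comm 1 t, add_lt_add_iff_left, sub_lt_sub_iff_right] using hlt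

theorem substSeq_le_substSeq_iff (h : ExtremalPair m X A) (h0 : Y 0 = Y' 0) :
    substSeq m X A Y ≼ substSeq m X A Y' ↔ Y ≼ Y' := by
  refine ⟨fun hle => ?_, fun hle => ?_⟩
  · by_contra! hlt
    exact (h.substSeq_lt_substSeq h0.symm hlt).not_ge hle
  · rcases hle.eq_or_lt with heq | hlt
    · rw [toLex.injective heq]
    · exact (h.substSeq_lt_substSeq h0 hlt).le

theorem substSeq_consSeq_le_iff (h : ExtremalPair m X A) {p : ℤ} :
    substSeq m X A (consSeq p Y) ≼ substSeq m X A (consSeq p Y') ↔ Y ≼ Y' :=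
  (h.substSeq_le_substSeq_iff (Y := consSeq p Y) (Y' := consSeq p Y') rfl).trans
    consSeq_le_consSeq_iff

theorem exists_ge_substSeq_zero_one (h : ExtremalPair m X A) (hY0 : Y 0 = 0) (hY1 : Y 1 = 1)
    {i : ℕ} (hi₀ : 0 < i) (hi : i < m) :
    ∃ U, U ≼ A ∧ ∀ j < m, shift i (substSeq m X A Y) j = U j := by
  have hfirst (j : ℕ) (hj : j + i < m) : shift i (substSeq m X A Y) j =
      A (j + i) + if j + i + 1 = m then 1 else 0 := by
    simp [shift, substSeq_of_lt hj, hY0, hY1]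
  obtain ⟨t, ht, hpre, hlt⟩ := h.exists_suffix_lt hi₀ hi
  have hpre' : ∀ j < t, shift i (substSeq m X A Y) j = A j := fun j hj => by
    rw [hfirst j (by omega), if_neg (by omega), add_zero, hpre j hj]
  have ht' := hfirst t (by omega)
  rcases lt_or_ge (shift i (substSeq m X A Y) t) (A t) with hlt' | hge
  · exact ⟨_, (toLex_lt_iff_exists.2 ⟨t, hpre', hlt'⟩).le, fun _ _ => rfl⟩
  · have hlast : t + i + 1 = m := by
      by_contra hne
      rw [if_neg hne] at ht'
      omega
    rw [if_pos hlast] at ht'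
    refine ⟨fun j => if j < m - i then A j else X (j + i), ?_, fun j hj => ?_⟩
    · rw [← shift_le_shift_iff (n := m - i) fun j hj => if_pos hj]
      convert h.left_le_shift_right (m - i) using 2
      funext j
      simp only [shift, if_neg (show ¬ j + (m - i) < m - i by omega)]
      rw [add_assoc, Nat.sub_add_cancel hi.le, h.periodic]
    · beta_reduce
      rcases lt_trichotomy j t with hjt | rfl | hjt
      · rw [hpre' j hjt, if_pos (by omega)]
      · rw [if_pos (by omega)]
        omega
      · rw [if_neg (by omega), shift, h.substSeq_of_le_of_lt (by omega) (by omega),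
          if_neg (by omega)]

theorem exists_ge_substSeq (h : ExtremalPair m X A) (hY : Binary Y) {i : ℕ} (hi : i < m)
    (hstart : i = 0 → Y 0 = 1) :
    ∃ U, U ≼ A ∧ ∀ j < m, shift i (substSeq m X A Y) j = U j := by
  rcases eq_or_ne (Y 0) (Y 1) with heq | hne
  · refine ⟨shift i (if Y 0 = 0 then A else X), ?_, fun j hj => ?_⟩
    · split_ifs
      exacts [h.shift_right_le_right i, h.shift_left_le_right i]
    · rcases lt_or_ge (j + i) m with hji | hji
      · rw [shift, substSeq_of_lt hji, heq, sub_self, ite_self, add_zero]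
        split_ifs <;> rfl
      · rw [shift, h.substSeq_of_le_of_lt hji (by omega), heq]
        split_ifs <;> rfl
  · rcases hY 0 with hY0 | hY0
    · have hY1 : Y 1 = 1 := (hY 1).resolve_left (hY0 ▸ hne.symm)
      exact h.exists_ge_substSeq_zero_one hY0 hY1 (by omega) hi
    · have hY1 : Y 1 = 0 := (hY 1).resolve_right (hY0 ▸ hne.symm)
      have hlt : shift i (substSeq m X A Y) ≺ shift i X := by
        refine toLex_lt_iff_exists.2 ⟨m - 1 - i, fun j hj => ?_, ?_⟩
        · simp [shift, substSeq_of_lt (show j + i < m by omega), hY0,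
            show j + i + 1 ≠ m by omega]
        · simp [shift, substSeq_of_lt (show m - 1 - i + i < m by omega), hY0, hY1,
            show m - 1 - i + i + 1 = m by omega]
      exact ⟨_, hlt.le.trans (h.shift_left_le_right i), fun _ _ => rfl⟩

/- The substituted sequence on the right starts with `L(s)⁺`, so it exceeds every sequence whose
first `m` letters are bounded by `A`. -/
theorem shift_substSeq_lt (h : ExtremalPair m X A) (hY : Binary Y) (hY'0 : Y' 0 = 0)
    (hY'1 : Y' 1 = 1) {i : ℕ} (hi : m ∣ i → Y (i / m) = 1) :
    shift i (substSeq m X A Y) ≺ substSeq m X A Y' := by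
  have hm := h.pos
  have hlast : m - 1 + 1 = m := Nat.sub_add_cancel hm
  obtain ⟨U, hU, hUeq⟩ := h.exists_ge_substSeq (hY.shift (i / m)) (Nat.mod_lt i hm) fun h0 => by
    simpa [shift] using hi (Nat.dvd_of_mod_eq_zero h0)
  rw [← h.shift_substSeq, shift_shift, Nat.mod_add_div] at hUeq
  refine lt_of_first_gt (n := m - 1) (fun j hj => ?_) ?_ hU fun j hj => hUeq j (by omega)
  · rw [substSeq_of_lt (by omega), if_pos hY'0, if_neg (by omega), add_zero]
  · rw [substSeq_of_lt (by omega), if_pos hY'0, if_pos hlast, hY'0, hY'1]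
    omega

theorem shift_substSeq_right_lt (h : ExtremalPair m X A) {N : ℕ} {R B : ℕ → ℤ}
    (hB : BinaryPair N R B) {i : ℕ} (hi : ¬ m * N ∣ i) :
    shift i (substSeq m X A (consSeq 0 B)) ≺ substSeq m X A (consSeq 0 B) := by
  by_cases hlow : m ∣ i ∧ consSeq 0 B (i / m) = 0
  · obtain ⟨⟨q, rfl⟩, hq⟩ := hlow
    rw [Nat.mul_div_cancel_left q h.pos] at hq
    have hNq : ¬ N ∣ q := fun hd => hi (Nat.mul_dvd_mul_left m hd)
    rw [h.shift_substSeq, shift_consSeq, hq]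
    exact h.substSeq_lt_substSeq rfl (consSeq_lt_consSeq_iff.2 (hB.shift_lt q hNq))
  · have hbin : Binary (consSeq 0 B) := hB.binary_right.consSeq (.inl rfl)
    exact h.shift_substSeq_lt (Y' := consSeq 0 B) hbin rfl hB.head_right fun hd =>
      (hbin _).resolve_left fun hq => hlow ⟨hd, hq⟩

theorem extremalPair_substSeq (h : ExtremalPair m X A) {N : ℕ} {R B : ℕ → ℤ}
    (hB : BinaryPair N R B) :
    ExtremalPair (m * N) (substSeq m X A (consSeq 1 R)) (substSeq m X A (consSeq 0 B)) where
  pos := Nat.mul_pos h.pos hB.pos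
  periodic i := by
    have heq := congrFun (h.shift_substSeq (Y := consSeq 1 R) N) i
    rwa [hB.consSeq_one_left, shift_shift, add_comm, ← shift_shift,
      shift_eq_self_of_dvd hB.periodic dvd_rfl, ← hB.consSeq_one_left] at heq
  exists_shift := by
    obtain ⟨k, hk⟩ := hB.exists_shift
    exact ⟨m * k, by rw [h.shift_substSeq, hB.consSeq_zero_right, hB.consSeq_one_left, hk,
      shift_shift, shift_shift, add_comm]⟩
  shift_lt i hi := h.shift_substSeq_right_lt hB hi
  lt_shift i hi := by
    have hlt := (h.reflect 0).shift_substSeq_right_lt hB.reflect hi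
    have hcons : consSeq 0 (_root_.reflect 1 R) = _root_.reflect 1 (consSeq 1 R) := by
      rw [reflect_consSeq, sub_self]
    rwa [hcons, substSeq_reflect (hB.binary.consSeq (.inr rfl)), shift_reflect,
      reflect_lt_reflect_iff] at hlt

end ExtremalPair

end SubstSeq

/-! ### Decoding -/

/-- The interval of all sequences lying between `Φ(0^∞)` and `Φ(1^∞)` when the digit preceding the
substituted sequence is `p`. -/
def codingInterval (m : ℕ) (X A : ℕ → ℤ) (p : ℤ) : Set (ℕ → ℤ) :=
  {z | substSeq m X A (consSeq p fun _ => 0) ≼ z ∧ z ≼ substSeq m X A (consSeq p fun _ => 1)}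

namespace ExtremalPair

section Decoding

variable {m : ℕ} {X A Y z : ℕ → ℤ} {p : ℤ}

theorem exists_next_digit (h : ExtremalPair m X A)
    (hlo : substSeq m X A (consSeq 1 fun _ => 0) ≼ shift m z)
    (hhi : shift m z ≼ substSeq m X A (consSeq 0 fun _ => 1))
    (hz : z ∈ codingInterval m X A p) :
    ∃ d : ℤ, (d = 0 ∨ d = 1) ∧ shift m z ∈ codingInterval m X A d ∧
      ∀ j < m, z j = substSeq m X A (consSeq p fun _ => d) j := by
  have hm := h.pos
  have hlast : m - 1 + 1 = m := Nat.sub_add_cancel hm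
  have hagree : ∀ j < m - 1, substSeq m X A (consSeq p fun _ => 0) j =
      substSeq m X A (consSeq p fun _ => 1) j := fun j hj => by
    rw [substSeq_consSeq_of_lt (by omega), substSeq_consSeq_of_lt (by omega),
      if_neg (show ¬ j + 1 = m by omega), if_neg (show ¬ j + 1 = m by omega)]
  have hcov : substSeq m X A (consSeq p fun _ => 0) (m - 1) ⋖
      substSeq m X A (consSeq p fun _ => 1) (m - 1) := by
    rw [Order.covBy_iff_add_one_eq, substSeq_consSeq_of_lt (by omega),
      substSeq_consSeq_of_lt (by omega), if_pos hlast, if_pos hlast]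
    ring
  have hsplit := eq_left_or_eq_right_of_between hagree hcov hz.1 hz.2
  rw [hlast, h.shift_substSeq_consSeq, h.shift_substSeq_consSeq] at hsplit
  rcases hsplit with ⟨hpre, hle⟩ | ⟨hpre, hle⟩
  · exact ⟨0, .inl rfl, ⟨(consSeq_const (0 : ℤ)).symm ▸ hle, hhi⟩, hpre⟩
  · exact ⟨1, .inr rfl, ⟨hlo, (consSeq_const (1 : ℤ)).symm ▸ hle⟩, hpre⟩

theorem exists_eq_substSeq (h : ExtremalPair m X A) (hp : p = 0 ∨ p = 1)
    (hz : z ∈ shiftsBetween (substSeq m X A (consSeq 1 fun _ => 0))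
      (substSeq m X A (consSeq 0 fun _ => 1)))
    (hzp : z ∈ codingInterval m X A p) :
    ∃ Y, Binary Y ∧ Y 0 = p ∧ z = substSeq m X A Y := by
  have hstep (q : ℕ) (p : ℤ) (hzp : shift (m * q) z ∈ codingInterval m X A p) :
      ∃ d : ℤ, (d = 0 ∨ d = 1) ∧ shift (m * (q + 1)) z ∈ codingInterval m X A d ∧
        ∀ j < m, shift (m * q) z j = substSeq m X A (consSeq p fun _ => d) j := by
    have hshift : shift m (shift (m * q) z) = shift (m * (q + 1)) z := by
      rw [shift_shift, mul_add_one, add_comm]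
    rw [← hshift]
    exact h.exists_next_digit (hshift ▸ (hz _).1) (hshift ▸ (hz _).2) hzp
  choose! next hbin hnext hagree using hstep
  let Y : ℕ → ℤ := fun n => Nat.rec p next n
  have hY : ∀ q, shift (m * q) z ∈ codingInterval m X A (Y q) := by
    intro q
    induction q with
    | zero => rwa [mul_zero, shift_zero]
    | succ q ih => exact hnext q (Y q) ih
  have hYbin : Binary Y
    | 0 => hp
    | q + 1 => hbin q (Y q) (hY q)
  refine ⟨Y, hYbin, rfl, funext fun i => ?_⟩
  have hlt := Nat.mod_lt i h.pos
  calc z i = shift (m * (i / m)) z (i % m) := by rw [shift, Nat.mod_add_div]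
    _ = substSeq m X A (consSeq (Y (i / m)) fun _ => Y (i / m + 1)) (i % m) :=
      hagree _ _ (hY _) _ hlt
    _ = substSeq m X A (shift (i / m) Y) (i % m) := by
      rw [substSeq_consSeq_of_lt hlt, substSeq_of_lt hlt, shift, shift, zero_add, add_comm 1]
    _ = substSeq m X A Y i := by rw [← h.shift_substSeq, shift, Nat.mod_add_div]

theorem exists_shift_eq_substSeq (h : ExtremalPair m X A) (hp : p = 0 ∨ p = 1)
    (hz : z ∈ shiftsBetween (substSeq m X A (consSeq 1 fun _ => 0))
      (substSeq m X A (consSeq 0 fun _ => 1)))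
    (hzp : z ∈ codingInterval m X A p) (hne : z ≠ substSeq m X A fun _ => p) :
    ∃ q Y, Binary Y ∧ Y 0 ≠ Y 1 ∧ shift (m * q) z = substSeq m X A Y := by
  obtain ⟨Y, hY, hY0, rfl⟩ := h.exists_eq_substSeq hp hz hzp
  obtain ⟨q, hq⟩ : ∃ q, Y q ≠ Y (q + 1) := by
    by_contra! hconst
    refine hne (congrArg _ (funext fun q => ?_))
    induction q with
    | zero => exact hY0
    | succ q ih => rw [← hconst, ih]
  exact ⟨q, shift q Y, hY.shift q, by simpa [shift, add_comm 1] using hq, h.shift_substSeq q⟩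

variable {N : ℕ} {R B : ℕ → ℤ}

theorem shiftsBetween_substSeq_subset (h : ExtremalPair m X A) (hB : BinaryPair N R B) :
    shiftsBetween (substSeq m X A (consSeq 1 R)) (substSeq m X A (consSeq 0 B)) ⊆
      shiftsBetween (substSeq m X A (consSeq 1 fun _ => 0))
        (substSeq m X A (consSeq 0 fun _ => 1)) := fun _ hz n =>
  ⟨(h.substSeq_consSeq_le_iff.2 hB.binary.const_zero_le).trans (hz n).1,
    (hz n).2.trans (h.substSeq_consSeq_le_iff.2 hB.binary_right.le_const_one)⟩

theorem left_le_shift_digits (h : ExtremalPair m X A) (hB : BinaryPair N R B) (hY : Binary Y)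
    (hne : Y 0 ≠ Y 1)
    (hle : ∀ n, substSeq m X A (consSeq 1 R) ≼ shift n (substSeq m X A Y)) (q : ℕ) :
    R ≼ shift (q + 1) Y := by
  have hone (q : ℕ) (hq : Y q = 1) : R ≼ shift (q + 1) Y := by
    have hle' := hle (m * q)
    rw [h.shift_substSeq, ← consSeq_shift, hq, h.substSeq_consSeq_le_iff] at hle'
    exact hle'
  induction q with
  | zero =>
    rcases hY 0 with h0 | h0
    · have h1 : Y 1 = 1 := (hY 1).resolve_left (h0 ▸ hne.symm)
      exact (toLex_lt_iff_exists.2 ⟨0, by simp, by simp [shift, hB.head_left, h1]⟩).le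
    · exact hone 0 h0
  | succ q ih =>
    rcases hY (q + 1) with h0 | h0
    · have hnext := (hY.shift (q + 1)).le_shift_one (by simpa [shift] using h0)
      rw [shift_shift, add_comm 1 (q + 1)] at hnext
      exact ih.trans hnext
    · exact hone (q + 1) h0

theorem shift_digits_le_right (h : ExtremalPair m X A) (hB : BinaryPair N R B) (hY : Binary Y)
    (hne : Y 0 ≠ Y 1)
    (hle : ∀ n, shift n (substSeq m X A Y) ≼ substSeq m X A (consSeq 0 B)) (q : ℕ) :
    shift (q + 1) Y ≼ B := by
  have hcons : consSeq 1 (_root_.reflect 1 B) = _root_.reflect 1 (consSeq 0 B) := by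
    rw [reflect_consSeq, sub_zero]
  have hrefl := (h.reflect 0).left_le_shift_digits hB.reflect hY.reflect
    (by simpa [_root_.reflect] using hne) (fun n => by
      rw [hcons, substSeq_reflect (hB.binary_right.consSeq (.inl rfl)), substSeq_reflect hY,
        shift_reflect, reflect_le_reflect_iff]
      exact hle n) q
  rwa [shift_reflect, reflect_le_reflect_iff] at hrefl

theorem exists_mem_codingInterval (hz : z ∈ shiftsBetween (substSeq m X A (consSeq 1 fun _ => 0))
      (substSeq m X A (consSeq 0 fun _ => 1))) (hmem : z ∉ shiftsBetween X A) :
    ∃ n, ∃ p : ℤ, (p = 0 ∨ p = 1) ∧ shift n z ∈ codingInterval m X A p ∧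
      shift n z ≠ substSeq m X A fun _ => p := by
  have hX : substSeq m X A (fun _ => 1) = X := by rw [substSeq_const, if_neg one_ne_zero]
  have hA : substSeq m X A (fun _ => 0) = A := by rw [substSeq_const, if_pos rfl]
  obtain ⟨n, hn⟩ := not_forall.1 hmem
  rcases not_and_or.1 hn with hlt | hlt
  · rw [not_le] at hlt
    refine ⟨n, 1, .inr rfl, ⟨(hz n).1, ?_⟩, fun heq => ?_⟩
    · rw [consSeq_const, hX]
      exact hlt.le
    · rw [heq, hX] at hlt
      exact hlt.false
  · rw [not_le] at hlt
    refine ⟨n, 0, .inl rfl, ⟨?_, (hz n).2⟩, fun heq => ?_⟩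
    · rw [consSeq_const, hA]
      exact hlt.le
    · rw [heq, hA] at hlt
      exact hlt.false

theorem shiftsBetween_substSeq_subset_union (h : ExtremalPair m X A) (hB : BinaryPair N R B) :
    shiftsBetween (substSeq m X A (consSeq 1 R)) (substSeq m X A (consSeq 0 B)) ⊆
      shiftsBetween X A ∪
        ⋃ n, shift n ⁻¹' (substSeq m X A '' (shift 1 ⁻¹' shiftsBetween R B)) := by
  intro z hz
  by_cases hmem : z ∈ shiftsBetween X A
  · exact .inl hmem
  have hbound := h.shiftsBetween_substSeq_subset hB hz
  obtain ⟨n, p, hp, hzp, hzne⟩ := exists_mem_codingInterval hbound hmem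
  obtain ⟨q, Y, hY, hne, hzY⟩ :=
    h.exists_shift_eq_substSeq hp (shift_mem_shiftsBetween hbound n) hzp hzne
  rw [shift_shift] at hzY
  have hmemY : substSeq m X A Y ∈ shiftsBetween _ _ := hzY ▸ shift_mem_shiftsBetween hz _
  refine .inr (mem_iUnion.2 ⟨m * q + n, Y, fun k => ?_, hzY.symm⟩)
  rw [shift_shift]
  exact ⟨h.left_le_shift_digits hB hY hne (fun n => (hmemY n).1) k,
    h.shift_digits_le_right hB hY hne (fun n => (hmemY n).2) k⟩

theorem countable_shiftsBetween_substSeq (h : ExtremalPair m X A) (hB : BinaryPair N R B)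
    (hXA : (shiftsBetween X A).Countable) (hRB : (shiftsBetween R B).Countable) :
    (shiftsBetween (substSeq m X A (consSeq 1 R))
      (substSeq m X A (consSeq 0 B))).Countable :=
  (hXA.union (countable_iUnion fun n =>
    countable_preimage_shift ((countable_preimage_shift hRB 1).image _) n)).mono
      (h.shiftsBetween_substSeq_subset_union hB)

end Decoding

end ExtremalPair

/-! ### Periodic sequences of words -/

section Words

/-- The sequence `w^∞` of `perSeq`, with integer digits so that differences of digits make sense. -/
def periodicSeq (w : List ℕ) (i : ℕ) : ℤ := perSeq w i

variable {v w s r : List ℕ}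

theorem periodicSeq_periodic (w : List ℕ) : Function.Periodic (periodicSeq w) w.length := by
  intro i
  simp only [periodicSeq, perSeq, Nat.add_mod_right]

theorem periodicSeq_of_lt {i : ℕ} (hi : i < w.length) : periodicSeq w i = w.getD i 0 := by
  rw [periodicSeq, perSeq, Nat.mod_eq_of_lt hi]

theorem eq_of_periodic {α : Type*} {x y : ℕ → α} {n : ℕ} (hn : 0 < n)
    (hx : Function.Periodic x n) (hy : Function.Periodic y n) (h : ∀ i < n, x i = y i) : x = y :=
  funext fun i => by rw [← hx.map_mod_nat, ← hy.map_mod_nat, h _ (Nat.mod_lt i hn)]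

theorem periodicSeq_rotate (w : List ℕ) (k : ℕ) :
    periodicSeq (w.rotate k) = shift k (periodicSeq w) := by
  rcases eq_or_ne w [] with rfl | hw
  · simp only [List.rotate_nil]
    rfl
  have hpos := List.length_pos_of_ne_nil hw
  funext i
  have hlt := Nat.mod_lt i hpos
  simp only [periodicSeq, perSeq, shift, List.length_rotate, List.getD_eq_getElem?_getD,
    List.getElem?_rotate hlt, Nat.mod_add_mod]

theorem periodicSeq_le_of_le (hl : v.length = w.length) (h : v ≤ w) :
    periodicSeq v ≼ periodicSeq w := by
  rcases h.eq_or_lt with rfl | hlt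
  · exact le_rfl
  rcases List.lt_iff_exists.1 hlt with ⟨-, hlen⟩ | ⟨n, hv, hw, hn, hlt⟩
  · omega
  · refine (toLex_lt_iff_exists.2 ⟨n, fun i hi => ?_, ?_⟩).le
    · rw [periodicSeq_of_lt (hi.trans hv), periodicSeq_of_lt (hi.trans hw),
        List.getD_eq_getElem _ _ (hi.trans hv), List.getD_eq_getElem _ _ (hi.trans hw), hn i hi]
    · rw [periodicSeq_of_lt hv, periodicSeq_of_lt hw, List.getD_eq_getElem _ _ hv,
        List.getD_eq_getElem _ _ hw]
      exact_mod_cast hlt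

theorem maxCyc_mem_and_le (w : List ℕ) :
    maxCyc w ∈ [] :: (List.range w.length).map w.rotate ∧
      ∀ v ∈ [] :: (List.range w.length).map w.rotate, v ≤ maxCyc w :=
  List.max?_eq_some_iff.1 List.max?_cons'

theorem rotate_le_maxCyc (w : List ℕ) (k : ℕ) : w.rotate k ≤ maxCyc w := by
  rcases eq_or_ne w [] with rfl | hw
  · simp [maxCyc]
  refine (maxCyc_mem_and_le w).2 _ (List.mem_cons_of_mem _ (List.mem_map.2 ⟨k % w.length, ?_, ?_⟩))
  · exact List.mem_range.2 (Nat.mod_lt _ (List.length_pos_of_ne_nil hw))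
  · exact List.rotate_mod w k

theorem exists_maxCyc_eq_rotate (w : List ℕ) : ∃ k, maxCyc w = w.rotate k := by
  rcases List.mem_cons.1 (maxCyc_mem_and_le w).1 with h | h
  · cases w with
    | nil => exact ⟨0, h⟩
    | cons a l =>
      have hle := rotate_le_maxCyc (a :: l) 0
      rw [h, List.rotate_zero] at hle
      exact absurd hle (List.nil_lt_cons a l).not_ge
  · obtain ⟨k, -, hk⟩ := List.mem_map.1 h
    exact ⟨k, hk.symm⟩

theorem length_maxCyc (w : List ℕ) : (maxCyc w).length = w.length := by
  obtain ⟨k, hk⟩ := exists_maxCyc_eq_rotate w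
  rw [hk, List.length_rotate]

theorem ExtremalPair.periodicSeq_maxCyc {A : ℕ → ℤ}
    (h : ExtremalPair w.length (periodicSeq w) A) : periodicSeq (maxCyc w) = A := by
  refine toLex.injective (le_antisymm ?_ ?_)
  · obtain ⟨k, hk⟩ := exists_maxCyc_eq_rotate w
    rw [hk, periodicSeq_rotate]
    exact h.shift_left_le_right k
  · obtain ⟨k, rfl⟩ := h.exists_shift
    rw [← periodicSeq_rotate]
    exact periodicSeq_le_of_le (by rw [List.length_rotate, length_maxCyc]) (rotate_le_maxCyc w k)

theorem binary_periodicSeq (h : ∀ d ∈ w, d ≤ 1) : Binary (periodicSeq w) := fun i => by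
  rcases eq_or_ne w [] with rfl | hw
  · exact .inl rfl
  · have hlt := Nat.mod_lt i (List.length_pos_of_ne_nil hw)
    have hle := h _ (List.getElem_mem hlt)
    rw [periodicSeq, perSeq, List.getD_eq_getElem _ _ hlt]
    omega

/-! ### The substitution on words -/

theorem getD_dropLast_concat {j : ℕ} (hj : j < w.length) (a : ℕ) :
    (w.dropLast ++ [a]).getD j 0 = if j + 1 = w.length then a else w.getD j 0 := by
  split_ifs with hlast
  · rw [List.getD_append_right _ _ _ _ (by grind)]
    simp [← hlast]
  · rw [List.getD_append _ _ _ _ (by grind), List.getD_eq_getElem _ _ (by grind),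
      List.getElem_dropLast, List.getD_eq_getElem]

theorem getLast!_eq_getD {j : ℕ} (hj : j + 1 = w.length) : w.getLast! = w.getD j 0 := by
  simp [List.getLast!_eq_getLast?_getD, List.getLast?_eq_getElem?, ← hj]

theorem getD_wplus {j : ℕ} (hj : j < w.length) :
    ((wplus w).getD j 0 : ℤ) = periodicSeq w j + if j + 1 = w.length then 1 else 0 := by
  rw [wplus, getD_dropLast_concat hj, periodicSeq_of_lt hj]
  split_ifs with hlast
  · rw [getLast!_eq_getD hlast, Nat.cast_succ]
  · rw [add_zero]

theorem getD_wminus (hlast : 0 < periodicSeq w (w.length - 1)) {j : ℕ} (hj : j < w.length) :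
    ((wminus w).getD j 0 : ℤ) = periodicSeq w j - if j + 1 = w.length then 1 else 0 := by
  rw [wminus, getD_dropLast_concat hj, periodicSeq_of_lt hj]
  split_ifs with hj'
  · rw [← hj', Nat.add_sub_cancel, periodicSeq_of_lt hj, Nat.cast_pos] at hlast
    rw [getLast!_eq_getD hj', Nat.cast_pred hlast]
  · rw [sub_zero]

theorem length_phiBlock (hs : s ≠ []) (p d : ℕ) : (phiBlock s p d).length = s.length := by
  have hpos := List.length_pos_of_ne_nil hs
  have hmax := length_maxCyc s
  unfold phiBlock
  split_ifs <;> simp only [wplus, wminus, List.length_append, List.length_dropLast,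
    List.length_singleton, hmax] <;> omega

theorem getD_phiBlock (hlast : 0 < periodicSeq s (s.length - 1)) {p d j : ℕ} (hp : p ≤ 1)
    (hd : d ≤ 1) (hj : j < s.length) :
    ((phiBlock s p d).getD j 0 : ℤ) =
      (if (p : ℤ) = 0 then periodicSeq (maxCyc s) j else periodicSeq s j) +
        if j + 1 = s.length then (d : ℤ) - p else 0 := by
  have hmax := length_maxCyc s
  interval_cases p <;> interval_cases d
  · simp [phiBlock, periodicSeq_of_lt (hmax.symm ▸ hj)]
  · rw [show phiBlock s 0 1 = wplus (maxCyc s) from rfl, getD_wplus (hmax.symm ▸ hj), hmax]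
    simp
  · rw [show phiBlock s 1 0 = wminus s from rfl, getD_wminus hlast hj]
    split_ifs <;> simp_all [sub_eq_add_neg]
  · simp [phiBlock, periodicSeq_of_lt hj]

theorem length_phiAux (hs : s ≠ []) (p : ℕ) (l : List ℕ) :
    (phiAux s p l).length = s.length * l.length := by
  induction l generalizing p with
  | nil => rfl
  | cons d l ih => rw [phiAux, List.length_append, length_phiBlock hs, ih, List.length_cons,
      mul_add_one, add_comm]

theorem getD_phiAux (h : ExtremalPair s.length (periodicSeq s) (periodicSeq (maxCyc s)))
    (hlast : 0 < periodicSeq s (s.length - 1)) {p : ℕ} {l : List ℕ} (hp : p ≤ 1)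
    (hl : ∀ d ∈ l, d ≤ 1) {i : ℕ} (hi : i < s.length * l.length) :
    ((phiAux s p l).getD i 0 : ℤ) = substSeq s.length (periodicSeq s) (periodicSeq (maxCyc s))
      (consSeq p fun q => l.getD q 0) i := by
  have hs : s ≠ [] := List.length_pos_iff.1 h.pos
  induction l generalizing p i with
  | nil => simp at hi
  | cons d l ih =>
    rw [List.forall_mem_cons] at hl
    rw [phiAux]
    rcases lt_or_ge i s.length with his | his
    · rw [List.getD_append _ _ _ _ (by rwa [length_phiBlock hs]), getD_phiBlock hlast hp hl.1 his,
        substSeq_consSeq_of_lt his, List.getD_cons_zero]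
    · obtain ⟨i, rfl⟩ := Nat.exists_eq_add_of_le' his
      have hdigits : (fun q => ((d :: l).getD q 0 : ℤ)) =
          consSeq (d : ℤ) fun q => (l.getD q 0 : ℤ) := by
        funext q
        cases q <;> rfl
      rw [List.length_cons, mul_add_one] at hi
      rw [List.getD_append_right _ _ _ _ (by rwa [length_phiBlock hs]), length_phiBlock hs,
        Nat.add_sub_cancel, ih hl.1 hl.2 (by omega), ← hdigits,
        ← h.shift_substSeq_consSeq (p : ℤ), shift]

theorem subst_eq_phiAux (hr : r ≠ []) (hhead : periodicSeq r 0 = 0) :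
    subst s r = phiAux s 1 r := by
  obtain ⟨d, l, rfl⟩ := List.exists_cons_of_ne_nil hr
  obtain rfl : d = 0 := by simpa [periodicSeq, perSeq] using hhead
  rfl

theorem length_subst (hs : s ≠ []) (hr : r ≠ []) (hhead : periodicSeq r 0 = 0) :
    (subst s r).length = s.length * r.length := by
  rw [subst_eq_phiAux hr hhead, length_phiAux hs]

theorem periodicSeq_subst (h : ExtremalPair s.length (periodicSeq s) (periodicSeq (maxCyc s)))
    (hlast : 0 < periodicSeq s (s.length - 1))
    (hB : BinaryPair r.length (periodicSeq r) (periodicSeq (maxCyc r))) (hr : ∀ d ∈ r, d ≤ 1) :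
    periodicSeq (subst s r) =
      substSeq s.length (periodicSeq s) (periodicSeq (maxCyc s)) (consSeq 1 (periodicSeq r)) := by
  have hne : r ≠ [] := List.length_pos_iff.1 hB.pos
  have hpair := h.extremalPair_substSeq hB
  have hlen := length_subst (List.length_pos_iff.1 h.pos) hne hB.head_left
  refine eq_of_periodic hpair.pos (hlen ▸ periodicSeq_periodic _) hpair.periodic fun i hi => ?_
  rw [periodicSeq_of_lt (hlen.symm ▸ hi), subst_eq_phiAux hne hB.head_left,
    getD_phiAux h hlast le_rfl hr hi]
  refine substSeq_congr (fun q hq => ?_) hi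
  cases q with
  | zero => rfl
  | succ q => exact (periodicSeq_of_lt hq).symm

/-- The words to which the substitution applies (their last letter has a predecessor, so that `s⁻`
does not truncate) and for which `Γ(s)` is countable. -/
structure Admissible (s : List ℕ) : Prop where
  pair : ExtremalPair s.length (periodicSeq s) (periodicSeq (maxCyc s))
  last_pos : 0 < periodicSeq s (s.length - 1)
  countable : (shiftsBetween (periodicSeq s) (periodicSeq (maxCyc s))).Countable

theorem admissible_subst (h : Admissible s) (hr : Admissible r) (hlen : 1 < r.length)
    (hbin : ∀ d ∈ r, d ≤ 1) : Admissible (subst s r) := by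
  have hB : BinaryPair r.length (periodicSeq r) (periodicSeq (maxCyc r)) :=
    { hr.pair with one_lt := hlen, binary := binary_periodicSeq hbin }
  have hseq := periodicSeq_subst h.pair h.last_pos hB hbin
  have hlens : (subst s r).length = s.length * r.length :=
    length_subst (List.length_pos_iff.1 h.pair.pos) (List.length_pos_iff.1 hB.pos) hB.head_left
  have hpair := h.pair.extremalPair_substSeq hB
  have hcount := h.pair.countable_shiftsBetween_substSeq hB h.countable hr.countable
  rw [← hseq, ← hlens] at hpair
  rw [← hseq, ← hpair.periodicSeq_maxCyc] at hcount
  refine ⟨hpair.periodicSeq_maxCyc ▸ hpair, ?_, hcount⟩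
  have hlong : 1 < (subst s r).length :=
    hlens ▸ Nat.one_lt_mul_iff.2 ⟨h.pair.pos, hB.pos, .inr hlen⟩
  exact (Nat.cast_nonneg _).trans_lt (hpair.head_lt_last hlong)

/-! ### Farey words -/

theorem periodicSeq_swap_ends (a : ℕ) (t : List ℕ) :
    periodicSeq ((a + 1) :: t ++ [a]) = fun i => periodicSeq (a :: t ++ [a + 1]) i +
      (if t.length + 2 ∣ i then 1 else 0) - if t.length + 2 ∣ i + 1 then 1 else 0 := by
  have hlen (b c : ℕ) : (b :: t ++ [c]).length = t.length + 2 := by simp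
  have hper (b c : ℕ) : Function.Periodic (periodicSeq (b :: t ++ [c])) (t.length + 2) :=
    hlen b c ▸ periodicSeq_periodic _
  refine eq_of_periodic (n := t.length + 2) (by omega) (hper _ _) (fun i => ?_) fun i hi => ?_
  · simp only [hper _ _ i, add_right_comm i _ 1, Nat.dvd_add_self_right]
  · have hdvd : t.length + 2 ∣ i ↔ i = 0 :=
      ⟨fun hd => Nat.eq_zero_of_dvd_of_lt hd hi, fun h0 => h0 ▸ dvd_zero _⟩
    have hdvd' : t.length + 2 ∣ i + 1 ↔ i = t.length + 1 :=
      ⟨fun hd => by have := Nat.le_of_dvd i.succ_pos hd; omega, fun h0 => h0 ▸ dvd_rfl⟩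
    rw [periodicSeq_of_lt (by rwa [hlen]), periodicSeq_of_lt (by rwa [hlen])]
    simp only [hdvd, hdvd']
    rcases i with _ | j
    · simp
    · rcases (show j ≤ t.length by omega).lt_or_eq with hj | rfl
      · simp [List.getElem?_append_left hj, hj.ne]
      · simp

theorem isChristoffel_of_rotate {a k : ℕ} {t : List ℕ}
    (h : (a :: t ++ [a + 1]).rotate k = (a + 1) :: t ++ [a]) :
    IsChristoffel (a :: t ++ [a + 1]).length k (periodicSeq (a :: t ++ [a + 1])) where
  pos := by simp
  periodic := periodicSeq_periodic _
  swap i := by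
    have heq := congrFun (periodicSeq_rotate (a :: t ++ [a + 1]) k) i
    rw [h, periodicSeq_swap_ends] at heq
    simpa [shift] using heq.symm

/-- A pair of words `u = 0y`, `v = x1` over `{0, 1}` with `0yx1 = x01y`. All pairs of consecutive
Farey words are of this form, and the equation says that swapping the first and the last letter of
the Farey word `uv` amounts to rotating it. -/
def FareyNeighbors (u v : List ℕ) : Prop :=
  (∀ d ∈ u ++ v, d ≤ 1) ∧ ∃ x y, u = 0 :: y ∧ v = x ++ [1] ∧ u ++ v = x ++ [0, 1] ++ y

namespace FareyNeighbors

variable {u v : List ℕ}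

theorem left (h : FareyNeighbors u v) : FareyNeighbors u (u ++ v) := by
  obtain ⟨hbin, x, y, rfl, rfl, heq⟩ := h
  refine ⟨fun d hd => hbin d ?_, 0 :: y ++ x, y, rfl, by simp, ?_⟩
  · simp only [List.mem_append] at hd ⊢
    tauto
  · simpa using heq

theorem right (h : FareyNeighbors u v) : FareyNeighbors (u ++ v) v := by
  obtain ⟨hbin, x, y, rfl, rfl, heq⟩ := h
  refine ⟨fun d hd => hbin d ?_, x, y ++ x ++ [1], by simp, rfl, ?_⟩
  · simp only [List.mem_append] at hd ⊢
    tauto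
  · simp [heq]

theorem exists_rotate (h : FareyNeighbors u v) :
    ∃ t k, u ++ v = 0 :: t ++ [1] ∧ (u ++ v).rotate k = 1 :: t ++ [0] := by
  obtain ⟨-, x, y, rfl, rfl, heq⟩ := h
  refine ⟨y ++ x, (x ++ [0]).length, by simp, ?_⟩
  rw [heq, show x ++ [0, 1] ++ y = (x ++ [0]) ++ (1 :: y) by simp, List.rotate_append_length_eq]
  simp

theorem one_lt_length (h : FareyNeighbors u v) : 1 < (u ++ v).length := by
  obtain ⟨-, x, y, rfl, rfl, -⟩ := h
  simp

end FareyNeighbors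

theorem isChain_fareyInsert {l : List (List ℕ)} (h : l.IsChain FareyNeighbors) :
    (fareyInsert l).IsChain FareyNeighbors := by
  induction l using fareyInsert.induct with
  | case1 => exact List.isChain_nil
  | case2 w => exact List.isChain_singleton w
  | case3 w v rest ih =>
    rw [List.isChain_cons_cons] at h
    obtain ⟨tail, htail⟩ : ∃ tail, fareyInsert (v :: rest) = v :: tail := by
      cases rest <;> exact ⟨_, rfl⟩
    have hchain := ih h.2
    rw [htail] at hchain
    rw [fareyInsert, htail]
    exact (hchain.cons_cons h.1.right).cons_cons h.1.left

theorem mem_fareyInsert {l : List (List ℕ)} (h : l.IsChain FareyNeighbors)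
    (hr : r ∈ fareyInsert l) : r ∈ l ∨ ∃ u v, FareyNeighbors u v ∧ r = u ++ v := by
  induction l using fareyInsert.induct with
  | case1 => exact .inl hr
  | case2 w => exact .inl hr
  | case3 w v rest ih =>
    rw [List.isChain_cons_cons] at h
    rw [fareyInsert, List.mem_cons, List.mem_cons] at hr
    rcases hr with rfl | rfl | hr
    · exact .inl List.mem_cons_self
    · exact .inr ⟨w, v, h.1, rfl⟩
    · exact (ih h.2 hr).imp_left (List.mem_cons_of_mem _)

theorem isChain_fareyLevel (n : ℕ) : (fareyLevel n).IsChain FareyNeighbors := by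
  induction n with
  | zero => simpa [fareyLevel] using ⟨by simp, [], [], by simp⟩
  | succ n ih => exact isChain_fareyInsert ih

theorem exists_fareyNeighbors_of_mem_fareySet (hr : r ∈ FareySet) :
    ∃ u v, FareyNeighbors u v ∧ r = u ++ v := by
  obtain ⟨⟨n, hn⟩, h0, h1⟩ := hr
  induction n with
  | zero => simp [fareyLevel, h0, h1] at hn
  | succ n ih => exact (mem_fareyInsert (isChain_fareyLevel n) hn).elim ih id

theorem iterate_theta (k : ℕ) (w : List ℕ) : theta^[k] w = w.map (k + ·) := by
  induction k with
  | zero => simp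
  | succ k ih =>
    rw [Function.iterate_succ_apply', ih, theta, List.map_map]
    exact List.map_congr_left fun d _ => add_right_comm k d 1

theorem exists_isChristoffel_of_mem_fareySet (hr : r ∈ FareySet) (c : ℕ) :
    ∃ k, IsChristoffel (r.map (c + ·)).length k (periodicSeq (r.map (c + ·))) ∧
      0 < periodicSeq (r.map (c + ·)) ((r.map (c + ·)).length - 1) := by
  obtain ⟨u, v, huv, rfl⟩ := exists_fareyNeighbors_of_mem_fareySet hr
  obtain ⟨t, k, heq, hrot⟩ := huv.exists_rotate
  have hmap (a b : ℕ) : (a :: t ++ [b]).map (c + ·) = (c + a) :: t.map (c + ·) ++ [c + b] := by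
    simp
  have hrot' := congrArg (List.map (c + ·)) hrot
  rw [List.map_rotate, heq, hmap, hmap] at hrot'
  rw [heq, hmap]
  refine ⟨k, isChristoffel_of_rotate hrot', ?_⟩
  rw [periodicSeq_of_lt (by simp)]
  simp

theorem isChristoffel_singleton (c : ℕ) : IsChristoffel 1 0 (periodicSeq [c]) where
  pos := one_pos
  periodic := periodicSeq_periodic [c]
  swap i := by simp

theorem admissible_of_isChristoffel {k : ℕ} (h : IsChristoffel s.length k (periodicSeq s))
    (hlast : 0 < periodicSeq s (s.length - 1)) : Admissible s := by
  have hmax := h.extremalPair.periodicSeq_maxCyc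
  exact ⟨hmax ▸ h.extremalPair, hlast, hmax ▸ h.countable_shiftsBetween⟩

theorem admissible_of_mem_fareyExt (hs : s ∈ FareyExt) : Admissible s := by
  obtain ⟨v, hv | rfl, c, rfl⟩ := hs
  · rw [iterate_theta]
    obtain ⟨k, hk, hlast⟩ := exists_isChristoffel_of_mem_fareySet hv c
    exact admissible_of_isChristoffel hk hlast
  · rw [iterate_theta]
    refine admissible_of_isChristoffel (isChristoffel_singleton (c + 1)) ?_
    rw [periodicSeq_of_lt (by simp)]
    simp

theorem admissible_of_mem_lambdaExt (hs : s ∈ LambdaExt) : Admissible s := by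
  simp only [LambdaExt, mem_iUnion] at hs
  obtain ⟨m, -, s₁, hs₁, rs, -, hrs, rfl⟩ := hs
  refine List.foldlRecOn rs subst (admissible_of_mem_fareyExt hs₁) fun s hs r hr => ?_
  have hadm := admissible_of_mem_fareyExt ⟨r, .inl (hrs r hr), 0, rfl⟩
  obtain ⟨u, v, huv, rfl⟩ := exists_fareyNeighbors_of_mem_fareySet (hrs r hr)
  exact admissible_subst hs hadm huv.one_lt_length huv.1

end Words

theorem toLex_cast_le_of_seqLe {x y : ℕ → ℕ} (h : seqLe x y) :
    (fun i => (x i : ℤ)) ≼ fun i => (y i : ℤ) := by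
  rcases h with rfl | ⟨n, hn, hlt⟩
  · exact le_rfl
  · exact (toLex_lt_iff_exists.2 ⟨n, fun i hi => congrArg Nat.cast (hn i hi), mod_cast hlt⟩).le

theorem gamma_countable_general (S : List ℕ) (hS : S ∈ LambdaExt) :
    Set.Countable {z : ℕ → ℕ |
      ∀ n : ℕ, seqLe (perSeq S) (shiftn n z) ∧ seqLe (shiftn n z) (perSeq (maxCyc S))} := by
  have hinj : Function.Injective fun (z : ℕ → ℕ) (i : ℕ) => (z i : ℤ) :=
    Nat.cast_injective.comp_left
  refine ((admissible_of_mem_lambdaExt hS).countable.preimage hinj).mono ?_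
  exact fun z hz n => ⟨toLex_cast_le_of_seqLe (hz n).1, toLex_cast_le_of_seqLe (hz n).2⟩

/-- Let `S ∈ Λ_e` and `M ∈ ℕ` with `J^S ⊆ [M, M+1)`.  Then the set
`Γ(S) = {z ∈ {0,…,M}^ℕ : S^∞ ≼ σⁿ(z) ≼ L(S)^∞ for all n ≥ 0}` is countable. -/
theorem gamma_countable (S : List ℕ) (hS : S ∈ LambdaExt) (M : ℕ)
    (hM : Jint S ⊆ Set.Ico (M : ℝ) ((M : ℝ) + 1)) :
    Set.Countable {z : ℕ → ℕ | (∀ i, z i ≤ M) ∧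
      ∀ n : ℕ, seqLe (perSeq S) (shiftn n z) ∧ seqLe (shiftn n z) (perSeq (maxCyc S))} :=
  (gamma_countable_general S hS).mono fun _ hz => hz.2
end
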